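/- For every subgroup H of G = PSU(3,q), q = 2^(2^n), of order q(q²-1) which contains an element of order q²-1, one has μ(H, G) = 1. (Such a subgroup is isomorphic to the semidirect product E_q ⋊ C_{q²-1} of an elementary abelian group of order q by a cyclic group of order q²-1, and is the stabilizer of a flag consisting of an isotropic point and a non-isotropic point of its polar line.) -/

import Mathlib

/-!
The interval above `H` in the subgroup lattice of `G = PSU(3, q)` is the diamond `{H, B, M, G}`, where
`B` is the stabilizer of the isotropic point of the flag and `M` the stabilizer of the non-isotropic
one, so that `μ(H, G) = -(μ(B, G) + μ(M, G) + μ(G, G)) = 1` (`mobius_of_diamond`).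

Let `C ≤ H` be generated by an element of order `r = q² - 1`. As `q ≡ 1 mod 3`, the center of
`SU(3, q)` is trivial and `G = SU(3, q)`. A generator of `C` has an eigenvalue `l ∈ F_{q²}` which is
not of norm one (`exists_eigenvalue`), so that `l̄⁻¹ ≠ l` is an eigenvalue as well, and the eigenvectors
for both span a hyperbolic line. In a basis consisting of this hyperbolic pair and a vector orthogonal
to it (`exists_hyperbolic_basis`), `G` is the unitary group of an antidiagonal Gram matrix and `C` is
its full diagonal torus (`exists_model_zpowers`).

In these coordinates one reads off the rank-one `(B, N)`-structure collected in `BNData`: the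
upper triangular group `B = UC`, the center `Z` of `U`, the involution `n` swapping the hyperbolic pair,
the Bruhat decomposition `G = B ∪ UnB`, and the facts that `C` acts simply transitively on the nonzero
elements of `U / Z` and transitively on `Z ∖ {1}`.

Let `K` be an overgroup of `ZC`. If `U ≤ K`, then `K ∈ {B, G}`. Otherwise `K ∩ B = ZC`, since `C`
permutes the nontrivial cosets of `Z` in `U` transitively. If `K` contains some `unb` with
`u ∈ U ∖ Z` and `b ∈ B`, then it contains `u⟨Z, nZn⟩u⁻¹`, hence `udu⁻¹` for a torus element
`d ∈ ⟨Z, nZn⟩`, hence the commutator of `u` and `d`, an element of `U ∖ Z`: a contradiction.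
Therefore `K` lies in `ZC ∪ ZnZC = M`, and `K` is `ZC` or `M` (`BNData.overgroups`).

It remains to see that a subgroup `H ≥ C` of order `qr` is `ZC` or its conjugate under `n`
(`BNData.mobius_eq_one`). The `H`-orbit of the isotropic point fixed by `B` contains no point
off the hyperbolic line, because such points lie in `C`-orbits of length `r > q`. The `C`-orbits on
that line have lengths `1`, `1`, `q - 1`, so that counting elements forces `H` to fix one of the two
isotropic points fixed by `C` (`BNData.le_B_or`); if this is the one fixed by `B`, then
`H = ZC` (`BNData.eq_ZC_of_le_B`).
-/

open scoped Classical Pointwise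

namespace PSUPaper

/-- `q = 2^(2^n)`. -/
abbrev qval (n : ℕ) : ℕ := 2 ^ 2 ^ n

/-- The field with `q² = 2^(2^(n+1))` elements. -/
abbrev Fq2 (n : ℕ) : Type := GaloisField 2 (2 ^ (n + 1))

/-- The involutory automorphism `x ↦ x^q` of `F_{q²}`, as a star-ring structure. -/
noncomputable instance starRingFq2 (n : ℕ) : StarRing (Fq2 n) where
  star x := x ^ qval n
  star_involutive x := by
    letI : Fintype (Fq2 n) := Fintype.ofFinite _
    show (x ^ qval n) ^ qval n = x
    rw [← pow_mul]
    have h : qval n * qval n = 2 ^ 2 ^ (n + 1) := by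
      rw [← pow_add, ← two_mul, pow_succ, mul_comm]
    have hcard : Fintype.card (Fq2 n) = 2 ^ 2 ^ (n + 1) := by
      rw [← Nat.card_eq_fintype_card, GaloisField.card 2 (2 ^ (n + 1)) (by positivity)]
    rw [h, ← hcard]
    exact FiniteField.pow_card x
  star_mul x y := by
    show (x * y) ^ qval n = y ^ qval n * x ^ qval n
    rw [mul_pow, mul_comm]
  star_add x y := by
    show (x + y) ^ qval n = x ^ qval n + y ^ qval n
    exact add_pow_char_pow x y 2 (2 ^ n)

/-- `SU(3,q)`: the subgroup of the unitary group `{M | M * (M^σ)ᵀ = 1}` (with respect to the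
star structure `σ : x ↦ x^q` on `F_{q²}`) consisting of the matrices of determinant 1. -/
noncomputable def SU3 (n : ℕ) : Subgroup (Matrix.unitaryGroup (Fin 3) (Fq2 n)) where
  carrier := {M | (M : Matrix (Fin 3) (Fin 3) (Fq2 n)).det = 1}
  one_mem' := by simp
  mul_mem' := by
    intro a b ha hb
    simp only [Set.mem_setOf_eq, Matrix.UnitaryGroup.mul_val, Matrix.det_mul] at *
    rw [ha, hb, mul_one]
  inv_mem' := by
    intro a ha
    simp only [Set.mem_setOf_eq, Matrix.UnitaryGroup.inv_val] at *
    rw [Matrix.star_eq_conjTranspose, Matrix.det_conjTranspose, ha, star_one]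

/-- `PSU(3,q)`: the quotient of `SU(3,q)` by its center. -/
noncomputable abbrev PSU3 (n : ℕ) : Type := SU3 n ⧸ Subgroup.center (SU3 n)

/-- `mu` is the Möbius function `H ↦ μ(H, G)` of the subgroup lattice of `G`:
`μ(G,G) = 1` and `∑_{J : H ≤ J ≤ G} μ(J,G) = 0` for `H < G`. -/
def IsSubgroupMobius {G : Type*} [Group G] (mu : Subgroup G → ℤ) : Prop :=
  ∀ H : Subgroup G, (∑ᶠ K ∈ {K : Subgroup G | H ≤ K}, mu K) = if H = ⊤ then 1 else 0

/-- `H` and `K` are conjugate subgroups. -/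
def IsConjSub {G : Type*} [Group G] (H K : Subgroup G) : Prop :=
  ∃ g : G, Subgroup.map (MulAut.conj g).toMonoidHom H = K

/-- The conjugacy classes of subgroups of `G`. -/
abbrev SubClasses (G : Type*) [Group G] : Type _ :=
  Quotient (MulAction.orbitRel (ConjAct G) (Subgroup G))

/-- The conjugacy class of a subgroup. -/
def clsOf {G : Type*} [Group G] (H : Subgroup G) : SubClasses G :=
  Quotient.mk (MulAction.orbitRel (ConjAct G) (Subgroup G)) H

/-- The order on conjugacy classes of subgroups: `[H] ≤ [K]` iff `H` is contained in some
conjugate of `K`. -/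
def clsLe {G : Type*} [Group G] (x y : SubClasses G) : Prop :=
  ∃ H K : Subgroup G, clsOf H = x ∧ clsOf K = y ∧ ∃ g : ConjAct G, H ≤ g • K

/-- `lam` is the Möbius function `[H] ↦ μ([H], [G])` of the poset of conjugacy classes of
subgroups of `G`: `μ([G],[G]) = 1` and `∑_{[J] : [H] ≤ [J] ≤ [G]} μ([J],[G]) = 0` for
`[H] < [G]`. -/
def IsClassMobius {G : Type*} [Group G] (lam : SubClasses G → ℤ) : Prop :=
  ∀ x : SubClasses G, (∑ᶠ y ∈ {y : SubClasses G | clsLe x y}, lam y) =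
    if x = clsOf (⊤ : Subgroup G) then 1 else 0

/-- `m` is the Möbius function `H ↦ μ_{L_p}({1}, H)` of the poset `L_p` of `p`-subgroups of `G`:
`μ_{L_p}({1},{1}) = 1` and `∑_{J ∈ L_p : J ≤ K} μ_{L_p}({1},J) = 0` for `{1} < K ∈ L_p`. -/
def IsPMobiusBot {G : Type*} [Group G] (p : ℕ) (m : Subgroup G → ℤ) : Prop :=
  m ⊥ = 1 ∧ ∀ K : Subgroup G, IsPGroup p K → ⊥ < K →
    (∑ᶠ J ∈ {J : Subgroup G | IsPGroup p J ∧ J ≤ K}, m J) = 0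

/-! ### Möbius values on a four-element interval -/

/-- If the interval above `H` is `{H, B, M, ⊤}` with `B` and `M` incomparable, then
`μ(H, G) = -(μ(B, G) + μ(M, G) + μ(G, G)) = -(-1 - 1 + 1) = 1`. -/
theorem mobius_of_diamond {G : Type*} [Group G] {mu : Subgroup G → ℤ} (hmu : IsSubgroupMobius mu)
    {H B M : Subgroup G} (hHB : H < B) (hHM : H < M) (hBM : ¬ B ≤ M) (hMB : ¬ M ≤ B)
    (hover : ∀ K, H ≤ K → K = H ∨ K = B ∨ K = M ∨ K = ⊤) : mu H = 1 := by
  have hBt : B ≠ ⊤ := fun h => hMB (h ▸ le_top)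
  have hMt : M ≠ ⊤ := fun h => hBM (h ▸ le_top)
  have hHt : H ≠ ⊤ := fun h => absurd hHB (by rw [h]; exact not_top_lt)
  have hne : B ≠ M := fun h => hBM h.le
  have htop := hmu ⊤
  have e1 : {K : Subgroup G | ⊤ ≤ K} = {⊤} := by ext K; simp
  rw [e1, finsum_mem_singleton, if_pos rfl] at htop
  have e2 : {K : Subgroup G | B ≤ K} = {B, ⊤} := by
    ext K
    simp only [Set.mem_ofPred_eq, Set.mem_insert_iff, Set.mem_singleton_iff]
    constructor
    · intro h
      rcases hover K (hHB.le.trans h) with rfl | rfl | rfl | rfl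
      · exact absurd h (not_le_of_gt hHB)
      · exact Or.inl rfl
      · exact absurd h hBM
      · exact Or.inr rfl
    · rintro (rfl | rfl)
      · exact le_rfl
      · exact le_top
  have e3 : {K : Subgroup G | M ≤ K} = {M, ⊤} := by
    ext K
    simp only [Set.mem_ofPred_eq, Set.mem_insert_iff, Set.mem_singleton_iff]
    constructor
    · intro h
      rcases hover K (hHM.le.trans h) with rfl | rfl | rfl | rfl
      · exact absurd h (not_le_of_gt hHM)
      · exact absurd h hMB
      · exact Or.inl rfl
      · exact Or.inr rfl
    · rintro (rfl | rfl)
      · exact le_rfl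
      · exact le_top
  have e4 : {K : Subgroup G | H ≤ K} = {H, B, M, ⊤} := by
    ext K
    simp only [Set.mem_ofPred_eq, Set.mem_insert_iff, Set.mem_singleton_iff]
    constructor
    · exact hover K
    · rintro (rfl | rfl | rfl | rfl)
      exacts [le_rfl, hHB.le, hHM.le, le_top]
  have hB := hmu B
  have hM := hmu M
  have hH := hmu H
  rw [e2, finsum_mem_pair hBt, if_neg hBt] at hB
  rw [e3, finsum_mem_pair hMt, if_neg hMt] at hM
  rw [e4, finsum_mem_insert _ (by simp [hHB.ne, hHM.ne, hHt]) (by simp),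
    finsum_mem_insert _ (by simp [hne, hBt]) (by simp), finsum_mem_pair hMt, if_neg hHt] at hH
  linarith

theorem mobius_comp_equiv {G : Type*} [Group G] {mu : Subgroup G → ℤ} (hmu : IsSubgroupMobius mu)
    (e : G ≃* G) : IsSubgroupMobius (fun K => mu (e.mapSubgroup K)) := by
  intro H
  have h := hmu (e.mapSubgroup H)
  have h2 : (∑ᶠ K ∈ {K : Subgroup G | H ≤ K}, mu (e.mapSubgroup K)) =
      ∑ᶠ K ∈ {K : Subgroup G | e.mapSubgroup H ≤ K}, mu K := by
    refine finsum_mem_eq_of_bijOn (fun K => e.mapSubgroup K) ?_ (fun _ _ => rfl)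
    refine ⟨fun K hK => ?_, e.mapSubgroup.injective.injOn, fun K hK => ?_⟩
    · exact e.mapSubgroup.monotone hK
    · refine ⟨e.mapSubgroup.symm K, ?_, e.mapSubgroup.apply_symm_apply K⟩
      exact (e.mapSubgroup.le_symm_apply).2 hK
  rw [h2, h]
  have h3 : e.mapSubgroup H = ⊤ ↔ H = ⊤ := map_eq_top_iff e.mapSubgroup
  simp only [h3]

/-! ### Overgroups of the flag stabilizer in a group with a rank-one Bruhat decomposition -/

/-- The part of the `(B, N)`-structure of `PSU(3, q)` that determines the overgroups of a flag
stabilizer. Here `B` stabilizes an isotropic point, `U` is its unipotent radical with centre `Z`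
(the transvections), `C` is a maximal torus of `B` of order `r = q² - 1`, `n` is an involution
representing the nontrivial Weyl group element, and `M` is the stabilizer of a non-isotropic point
whose polar line is the hyperbolic line fixed by `C`. -/
structure BNData (G : Type*) [Group G] (q r : ℕ) where
  (B U Z C M : Subgroup G)
  (n d : G)
  Z_le_U : Z ≤ U
  U_le_B : U ≤ B
  C_le_B : C ≤ B
  B_eq : ∀ b ∈ B, ∃ u ∈ U, ∃ c ∈ C, b = u * c
  Z_normal : ∀ b ∈ B, ∀ z ∈ Z, b * z * b⁻¹ ∈ Z
  U_normal : ∀ b ∈ B, ∀ u ∈ U, b * u * b⁻¹ ∈ U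
  U_inf_C : ∀ u ∈ U, u ∈ C → u = 1
  n_C : ∀ c ∈ C, n * c * n ∈ C
  n_sq : n * n = 1
  n_notMem : n ∉ B
  bruhat : ∀ g, g ∉ B → ∃ u ∈ U, ∃ b ∈ B, g = u * n * b
  U_n : ∀ u ∈ U, n * u * n ∈ B → u = 1
  C_trans : ∀ u ∈ U, u ∉ Z → ∀ u' ∈ U, u' ∉ Z → ∃ c ∈ C, ∃ z ∈ Z, u' = c * u * c⁻¹ * z
  C_free : ∀ u ∈ U, u ∉ Z → ∀ c ∈ C, c * u * c⁻¹ = u → c = 1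
  C_transZ : ∀ z ∈ Z, z ≠ 1 → ∀ z' ∈ Z, z' ≠ 1 → ∃ c ∈ C, c * z * c⁻¹ = z'
  d_C : d ∈ C
  /-- `d` lies in the subgroup generated by the opposite root groups `Z` and `nZn`. -/
  d_mem : ∀ K : Subgroup G, Z ≤ K → (∀ z ∈ Z, n * z * n ∈ K) → d ∈ K
  d_comm : ∀ u ∈ U, u ∉ Z → u * d * u⁻¹ * d⁻¹ ∉ Z
  Z_le_M : Z ≤ M
  C_le_M : C ≤ M
  n_M : n ∈ M
  U_M : ¬ U ≤ M
  card_Z : Nat.card Z = q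
  card_C : Nat.card C = r

namespace BNData

variable {G : Type*} [Group G] {q r : ℕ} (D : BNData G q r)

/-- `C` permutes the nontrivial cosets of `Z` in `U` transitively. -/
theorem U_le_of_mem {K : Subgroup G} (hZ : D.Z ≤ K) (hC : D.C ≤ K) {u : G} (hu : u ∈ D.U)
    (huZ : u ∉ D.Z) (huK : u ∈ K) : D.U ≤ K := by
  intro u' hu'
  by_cases h : u' ∈ D.Z
  · exact hZ h
  · obtain ⟨c, hc, z, hz, rfl⟩ := D.C_trans u hu huZ u' hu' h
    exact K.mul_mem (K.mul_mem (K.mul_mem (hC hc) huK) (K.inv_mem (hC hc))) (hZ hz)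

theorem B_le_of_U_le {K : Subgroup G} (hC : D.C ≤ K) (hU : D.U ≤ K) : D.B ≤ K := by
  intro b hb
  obtain ⟨u, hu, c, hc, rfl⟩ := D.B_eq b hb
  exact K.mul_mem (hU hu) (hC hc)

theorem eq_top_of_B_le {K : Subgroup G} (hB : D.B ≤ K) (hK : ¬ K ≤ D.B) : K = ⊤ := by
  obtain ⟨k, hk, hkB⟩ := SetLike.not_le_iff_exists.1 hK
  obtain ⟨u, hu, b, hb, rfl⟩ := D.bruhat k hkB
  have hn : D.n ∈ K := by
    have := K.mul_mem (K.mul_mem (K.inv_mem (hB (D.U_le_B hu))) hk) (K.inv_mem (hB hb))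
    convert this using 1
    group
  refine (eq_top_iff).2 fun g _ => ?_
  by_cases hg : g ∈ D.B
  · exact hB hg
  · obtain ⟨u, hu, b, hb, rfl⟩ := D.bruhat g hg
    exact K.mul_mem (K.mul_mem (hB (D.U_le_B hu)) hn) (hB hb)

/-- If an overgroup of `ZC` moves the fixed point of `B` to a point off the distinguished line,
it contains a conjugate `u⟨Z, nZn⟩u⁻¹` with `u ∈ U ∖ Z`; the commutator of `u` with `d` is then a
noncentral element of `U` in that overgroup. -/
theorem mem_Z_of_bruhat {K : Subgroup G} (hZ : D.Z ≤ K) (hC : D.C ≤ K) (hU : ¬ D.U ≤ K)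
    {u b : G} (hu : u ∈ D.U) (hb : b ∈ D.B) (hk : u * D.n * b ∈ K) : u ∈ D.Z := by
  by_contra huZ
  apply hU
  have hd : D.d ∈ K.comap (MulAut.conj u).toMonoidHom := by
    apply D.d_mem
    · intro z hz
      simp only [Subgroup.mem_comap, MulEquiv.coe_toMonoidHom, MulAut.conj_apply]
      exact hZ (D.Z_normal u (D.U_le_B hu) z hz)
    · intro z hz
      simp only [Subgroup.mem_comap, MulEquiv.coe_toMonoidHom, MulAut.conj_apply]
      have h1 : b⁻¹ * z * b⁻¹⁻¹ ∈ K := hZ (D.Z_normal _ (D.B.inv_mem hb) z hz)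
      have h2 := K.mul_mem (K.mul_mem hk h1) (K.inv_mem hk)
      have hn : D.n⁻¹ = D.n := inv_eq_of_mul_eq_one_left D.n_sq
      convert h2 using 1
      simp only [mul_inv_rev, hn, inv_inv]
      group
  simp only [Subgroup.mem_comap, MulEquiv.coe_toMonoidHom, MulAut.conj_apply] at hd
  have h3 := K.mul_mem hd (K.inv_mem (hC D.d_C))
  refine D.U_le_of_mem hZ hC ?_ (D.d_comm u hu huZ) h3
  have := D.U.mul_mem hu (D.U_normal _ (D.C_le_B D.d_C) _ (D.U.inv_mem hu))
  convert this using 1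
  group

theorem mem_sup_of_mem_B {K : Subgroup G} (hZ : D.Z ≤ K) (hC : D.C ≤ K) (hU : ¬ D.U ≤ K)
    {k : G} (hk : k ∈ K) (hkB : k ∈ D.B) : ∃ z ∈ D.Z, ∃ c ∈ D.C, k = z * c := by
  obtain ⟨u, hu, c, hc, rfl⟩ := D.B_eq k hkB
  have huK : u ∈ K := (K.mul_mem_cancel_right (hC hc)).1 hk
  refine ⟨u, ?_, c, hc, rfl⟩
  by_contra h
  exact hU (D.U_le_of_mem hZ hC hu h huK)

theorem exists_of_notMem_B {K : Subgroup G} (hZ : D.Z ≤ K) (hC : D.C ≤ K) (hU : ¬ D.U ≤ K)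
    {k : G} (hk : k ∈ K) (hkB : k ∉ D.B) :
    D.n ∈ K ∧ ∃ z ∈ D.Z, ∃ z' ∈ D.Z, ∃ c ∈ D.C, k = z * D.n * (z' * c) := by
  obtain ⟨z, hz, b, hb, rfl⟩ := D.bruhat k hkB
  have hzZ := D.mem_Z_of_bruhat hZ hC hU hz hb hk
  obtain ⟨u, hu, c, hc, rfl⟩ := D.B_eq b hb
  have h1 : D.n * u ∈ K := by
    have := K.mul_mem (K.mul_mem (K.inv_mem (hZ hzZ)) hk) (K.inv_mem (hC hc))
    convert this using 1
    group
  have hn : D.n⁻¹ = D.n := inv_eq_of_mul_eq_one_left D.n_sq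
  have h2 : u⁻¹ * D.n * 1 ∈ K := by
    have := K.inv_mem h1
    rw [mul_inv_rev, hn] at this
    simpa using this
  have hu1 : u ∈ D.Z := D.Z.inv_mem_iff.1
    (D.mem_Z_of_bruhat hZ hC hU (D.U.inv_mem hu) D.B.one_mem h2)
  exact ⟨(K.mul_mem_cancel_right (hZ hu1)).1 h1, z, hzZ, u, hu1, c, hc, rfl⟩

theorem ZC_le_B : D.Z ⊔ D.C ≤ D.B := sup_le (D.Z_le_U.trans D.U_le_B) D.C_le_B

theorem ZC_le_M : D.Z ⊔ D.C ≤ D.M := sup_le D.Z_le_M D.C_le_M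

/-- The overgroups of `ZC` are `ZC`, `B`, `M` and the whole group. -/
theorem overgroups (K : Subgroup G) (hK : D.Z ⊔ D.C ≤ K) :
    K = D.Z ⊔ D.C ∨ K = D.B ∨ K = D.M ∨ K = ⊤ := by
  have hZ : D.Z ≤ K := le_sup_left.trans hK
  have hC : D.C ≤ K := le_sup_right.trans hK
  have key : ∀ K : Subgroup G, D.Z ≤ K → D.C ≤ K → ¬ D.U ≤ K → ∀ L : Subgroup G, D.Z ≤ L →
      D.C ≤ L → D.n ∈ L → K ≤ L := by
    intro K hZ hC hU L hZL hCL hn k hk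
    by_cases hkB : k ∈ D.B
    · obtain ⟨z, hz, c, hc, rfl⟩ := D.mem_sup_of_mem_B hZ hC hU hk hkB
      exact L.mul_mem (hZL hz) (hCL hc)
    · obtain ⟨-, z, hz, z', hz', c, hc, rfl⟩ := D.exists_of_notMem_B hZ hC hU hk hkB
      exact L.mul_mem (L.mul_mem (hZL hz) hn) (L.mul_mem (hZL hz') (hCL hc))
  by_cases hU : D.U ≤ K
  · have hB := D.B_le_of_U_le hC hU
    by_cases hKB : K ≤ D.B
    · exact Or.inr (Or.inl (le_antisymm hKB hB))
    · exact Or.inr (Or.inr (Or.inr (D.eq_top_of_B_le hB hKB)))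
  · by_cases hKB : K ≤ D.B
    · refine Or.inl (le_antisymm (fun k hk => ?_) hK)
      obtain ⟨z, hz, c, hc, rfl⟩ := D.mem_sup_of_mem_B hZ hC hU hk (hKB hk)
      exact Subgroup.mul_mem_sup hz hc
    · obtain ⟨k, hk, hkB⟩ := SetLike.not_le_iff_exists.1 hKB
      have hn := (D.exists_of_notMem_B hZ hC hU hk hkB).1
      exact Or.inr (Or.inr (Or.inl (le_antisymm (key K hZ hC hU _ D.Z_le_M D.C_le_M D.n_M)
        (key D.M D.Z_le_M D.C_le_M D.U_M _ hZ hC hn))))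

theorem mobius_ZC {mu : Subgroup G → ℤ} (hmu : IsSubgroupMobius mu) : mu (D.Z ⊔ D.C) = 1 := by
  have hMB : ¬ D.M ≤ D.B := fun h => D.n_notMem (h D.n_M)
  have hBM : ¬ D.B ≤ D.M := fun h => D.U_M (D.U_le_B.trans h)
  refine mobius_of_diamond hmu (B := D.B) (M := D.M) ?_ ?_ hBM hMB D.overgroups
  · exact lt_of_le_not_ge D.ZC_le_B fun h => hBM (h.trans D.ZC_le_M)
  · exact lt_of_le_not_ge D.ZC_le_M fun h => hMB (h.trans D.ZC_le_B)

/-! ### Recognizing the flag stabilizers among the overgroups of a torus -/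

/-- `r` times the number of distinct cosets of `B` met by `K` is at most `|K|`. -/
theorem card_mul_le [Finite G] {K : Subgroup G} (hC : D.C ≤ K) {ι : Type*} [Finite ι] (f : ι → G)
    (hfK : ∀ i, f i ∈ K) (hf : ∀ i j, (f i)⁻¹ * f j ∈ D.B → i = j) :
    Nat.card ι * r ≤ Nat.card K := by
  rw [← D.card_C, ← Nat.card_prod]
  refine Nat.card_le_card_of_injective
    (fun p : ι × D.C => (⟨f p.1 * p.2, K.mul_mem (hfK _) (hC p.2.2)⟩ : K)) ?_
  rintro ⟨i, c, hc⟩ ⟨j, c', hc'⟩ h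
  simp only [Subtype.mk.injEq] at h
  have hij : i = j := by
    apply hf
    have : (f i)⁻¹ * f j = c * c'⁻¹ := by
      rw [inv_mul_eq_iff_eq_mul, ← mul_assoc, h]
      group
    rw [this]
    exact D.B.mul_mem (D.C_le_B hc) (D.B.inv_mem (D.C_le_B hc'))
  subst hij
  simpa using h

theorem card_ZC_le [Finite G] : Nat.card (D.Z ⊔ D.C : Subgroup G) ≤ q * r := by
  have hU : ¬ D.U ≤ D.Z ⊔ D.C := fun h => D.U_M (h.trans D.ZC_le_M)
  have h : q * r = Nat.card (D.Z × D.C) := by rw [Nat.card_prod, D.card_C, D.card_Z]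
  rw [h]
  refine Nat.card_le_card_of_surjective
    (fun p : D.Z × D.C => (⟨p.1 * p.2, Subgroup.mul_mem_sup p.1.2 p.2.2⟩ :
      (D.Z ⊔ D.C : Subgroup G))) ?_
  rintro ⟨k, hk⟩
  obtain ⟨z, hz, c, hc, rfl⟩ := D.mem_sup_of_mem_B le_sup_left le_sup_right hU hk (D.ZC_le_B hk)
  exact ⟨⟨⟨z, hz⟩, ⟨c, hc⟩⟩, rfl⟩

/-- A subgroup of `B` of order `qr` containing `C` has to be `ZC`: a noncentral element of `U`
would have `r` conjugates under `C`, making the subgroup of order at least `r²`. -/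
theorem eq_ZC_of_le_B [Finite G] (hqr : q < r) {K : Subgroup G} (hC : D.C ≤ K)
    (hcard : Nat.card K = q * r) (hB : K ≤ D.B) : K = D.Z ⊔ D.C := by
  have hr : 0 < r := by omega
  have hle : K ≤ D.Z ⊔ D.C := by
    intro k hk
    obtain ⟨u, hu, c, hc, rfl⟩ := D.B_eq k (hB hk)
    refine Subgroup.mul_mem_sup ?_ hc
    have huK : u ∈ K := (K.mul_mem_cancel_right (hC hc)).1 hk
    by_contra huZ
    have h : Nat.card (D.C × D.C) ≤ Nat.card K := by
      refine Nat.card_le_card_of_injective (fun p : D.C × D.C =>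
        (⟨(p.1 * u * (p.1 : G)⁻¹) * p.2, K.mul_mem (K.mul_mem (K.mul_mem (hC p.1.2) huK)
          (K.inv_mem (hC p.1.2))) (hC p.2.2)⟩ : K)) ?_
      rintro ⟨⟨a, ha⟩, ⟨b, hb⟩⟩ ⟨⟨a', ha'⟩, ⟨b', hb'⟩⟩ h
      simp only [Subtype.mk.injEq] at h
      have e1 : (a' * u * a'⁻¹)⁻¹ * (a * u * a⁻¹) = b' * b⁻¹ := by
        rw [inv_mul_eq_iff_eq_mul, ← mul_assoc, ← h]
        group
      have e2 : (a' * u * a'⁻¹)⁻¹ * (a * u * a⁻¹) = 1 := by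
        apply D.U_inf_C
        · exact D.U.mul_mem (D.U.inv_mem (D.U_normal _ (D.C_le_B ha') _ hu))
            (D.U_normal _ (D.C_le_B ha) _ hu)
        · rw [e1]
          exact D.C.mul_mem hb' (D.C.inv_mem hb)
      have hbb : b' = b := by rwa [e1, mul_inv_eq_one] at e2
      have e3 : (a'⁻¹ * a) * u * (a'⁻¹ * a)⁻¹ = u := by
        rw [inv_mul_eq_one] at e2
        calc (a'⁻¹ * a) * u * (a'⁻¹ * a)⁻¹ = a'⁻¹ * (a * u * a⁻¹) * a' := by group
          _ = u := by rw [← e2]; group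
      have e4 := D.C_free u hu huZ _ (D.C.mul_mem (D.C.inv_mem ha') ha) e3
      rw [inv_mul_eq_one] at e4
      simp [e4, hbb]
    rw [Nat.card_prod, D.card_C, hcard] at h
    exact absurd (Nat.le_of_mul_le_mul_right h hr) (by omega)
  refine Subgroup.eq_of_le_of_card_ge hle ?_
  rw [hcard]
  exact D.card_ZC_le

/-- A subgroup of order `qr` containing `C` maps the point fixed by `B` to points of the
distinguished line only, since `C` acts with orbits of length `r > q` off that line. -/
theorem mem_Z_of_card [Finite G] (hqr : q < r) {K : Subgroup G} (hC : D.C ≤ K)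
    (hcard : Nat.card K = q * r) {u b : G} (hu : u ∈ D.U) (hb : b ∈ D.B)
    (hk : u * D.n * b ∈ K) : u ∈ D.Z := by
  by_contra huZ
  have hr : 0 < r := by omega
  have hn : D.n⁻¹ = D.n := inv_eq_of_mul_eq_one_left D.n_sq
  have h := D.card_mul_le hC (ι := D.C) (fun c => (c : G) * (u * D.n * b))
    (fun c => K.mul_mem (hC c.2) hk) ?_
  · rw [D.card_C, hcard] at h
    exact absurd (Nat.le_of_mul_le_mul_right h hr) (by omega)
  · rintro ⟨a, ha⟩ ⟨c, hc⟩ h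
    simp only at h
    -- with `e = a⁻¹c`, the element `n u⁻¹ e u n` lies in `B`, and so does `n e⁻¹ n`
    have he : a⁻¹ * c ∈ D.C := D.C.mul_mem (D.C.inv_mem ha) hc
    have h1 : D.n * (u⁻¹ * ((a⁻¹ * c) * u * (a⁻¹ * c)⁻¹)) * D.n ∈ D.B := by
      have h2 := D.B.mul_mem (D.B.mul_mem (D.B.mul_mem hb h) (D.B.inv_mem hb))
        (D.C_le_B (D.n_C _ (D.C.inv_mem he)))
      convert h2 using 1
      have : ∀ x y : G, x * D.n * (D.n * y) = x * y := by
        intro x y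
        rw [mul_assoc, ← mul_assoc D.n, D.n_sq, one_mul]
      simp only [mul_inv_rev, hn, inv_inv]
      calc _ = D.n * u⁻¹ * a⁻¹ * c * u * (c⁻¹ * a * D.n) := by group
        _ = D.n * u⁻¹ * a⁻¹ * c * u * D.n * (D.n * (c⁻¹ * a * D.n)) := by rw [this]
        _ = _ := by group
    have h3 := D.U_n _ (D.U.mul_mem (D.U.inv_mem hu) (D.U_normal _ (D.C_le_B he) _ hu)) h1
    rw [inv_mul_eq_one] at h3
    have h4 := D.C_free u hu huZ _ he h3.symm
    rw [inv_mul_eq_one] at h4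
    simp [h4]

/-- `C` is transitive on the points of the distinguished line other than the two it fixes. -/
theorem exists_of_ne_one {K : Subgroup G} (hC : D.C ≤ K) {z b : G} (hz : z ∈ D.Z) (hz1 : z ≠ 1)
    (hb : b ∈ D.B) (hk : z * D.n * b ∈ K) (z' : G) (hz' : z' ∈ D.Z) (hz1' : z' ≠ 1) :
    ∃ b' ∈ D.B, z' * D.n * b' ∈ K := by
  obtain ⟨c, hc, rfl⟩ := D.C_transZ z hz hz1 z' hz' hz1'
  have hn : D.n⁻¹ = D.n := inv_eq_of_mul_eq_one_left D.n_sq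
  refine ⟨(D.n * c * D.n) * b, D.B.mul_mem (D.C_le_B (D.n_C _ hc)) hb, ?_⟩
  convert K.mul_mem (hC hc) hk using 1
  have : ∀ x y : G, x * D.n * (D.n * y) = x * y := by
    intro x y
    rw [mul_assoc, ← mul_assoc D.n, D.n_sq, one_mul]
  calc _ = c * z * c⁻¹ * D.n * (D.n * (c * D.n * b)) := by group
    _ = _ := by rw [this]; group

/-- The orbit of the point fixed by `B` cannot be the whole distinguished line, as `q + 1 > q`. -/
theorem n_notMem_of_card [Finite G] (hq : 0 < r) {K : Subgroup G} (hC : D.C ≤ K)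
    (hcard : Nat.card K = q * r) {z b : G} (hz : z ∈ D.Z) (hz1 : z ≠ 1)
    (hb : b ∈ D.B) (hk : z * D.n * b ∈ K) {b' : G} (hb' : b' ∈ D.B) : D.n * b' ∉ K := by
  intro hk'
  have hall : ∀ w : D.Z, ∃ b ∈ D.B, (w : G) * D.n * b ∈ K := by
    rintro ⟨w, hw⟩
    by_cases hw1 : w = 1
    · exact ⟨b', hb', by simpa [hw1] using hk'⟩
    · exact D.exists_of_ne_one hC hz hz1 hb hk w hw hw1
  choose β hβ hβK using hall
  have hn : D.n⁻¹ = D.n := inv_eq_of_mul_eq_one_left D.n_sq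
  have hZB : D.Z ≤ D.B := D.Z_le_U.trans D.U_le_B
  have h := D.card_mul_le hC (ι := Option D.Z)
    (fun o => o.elim 1 (fun w => (w : G) * D.n * β w)) ?_ ?_
  · rw [Finite.card_option, D.card_Z, hcard] at h
    exact absurd (Nat.le_of_mul_le_mul_right h hq) (by omega)
  · rintro (_ | w)
    · exact K.one_mem
    · exact hβK w
  · have hnot : ∀ w : D.Z, (w : G) * D.n * β w ∉ D.B := by
      intro w hw
      rw [D.B.mul_mem_cancel_right (hβ w), D.B.mul_mem_cancel_left (hZB w.2)] at hw
      exact D.n_notMem hw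
    rintro (_ | w) (_ | w') h
    · rfl
    · exact absurd (by simpa using h) (hnot w')
    · have h' : ((w : G) * D.n * β w)⁻¹ ∈ D.B := by simpa using h
      exact absurd (D.B.inv_mem_iff.1 h') (hnot w)
    · simp only [Option.elim] at h
      have h1 : D.n * ((w : G)⁻¹ * w') * D.n ∈ D.B := by
        have := D.B.mul_mem (D.B.mul_mem (hβ w) h) (D.B.inv_mem (hβ w'))
        convert this using 1
        simp only [mul_inv_rev, hn]
        group
      have h2 := D.U_n _ (D.Z_le_U (D.Z.mul_mem (D.Z.inv_mem w.2) w'.2)) h1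
      rw [inv_mul_eq_one] at h2
      rw [Subtype.ext h2]

/-- If the orbit of the point fixed by `B` has length two, the subgroup normalizes the torus, so
its order is at most `2r`. -/
theorem exists_ne_one_of_card [Finite G] (hqr : q < r) (hq : 2 < q) {K : Subgroup G}
    (hC : D.C ≤ K) (hcard : Nat.card K = q * r) (hKB : ¬ K ≤ D.B) :
    ∃ z ∈ D.Z, z ≠ 1 ∧ ∃ b ∈ D.B, z * D.n * b ∈ K := by
  by_contra hcon
  push Not at hcon
  have hn : D.n⁻¹ = D.n := inv_eq_of_mul_eq_one_left D.n_sq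
  have hnB : ∀ k ∈ K, k ∉ D.B → ∃ b ∈ D.B, k = D.n * b := by
    intro k hk hkB
    obtain ⟨u, hu, b, hb, rfl⟩ := D.bruhat k hkB
    have huZ := D.mem_Z_of_card hqr hC hcard hu hb hk
    have hu1 : u = 1 := by
      by_contra h
      exact hcon u huZ h b hb hk
    exact ⟨b, hb, by simp [hu1]⟩
  obtain ⟨k, hk, hkB⟩ := SetLike.not_le_iff_exists.1 hKB
  obtain ⟨b, hb, rfl⟩ := hnB k hk hkB
  have hKC : ∀ x ∈ K, x ∈ D.B → x ∈ D.C := by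
    intro x hx hxB
    have h1 : x * (D.n * b) ∉ D.B := by
      rwa [D.B.mul_mem_cancel_left hxB]
    obtain ⟨b', hb', h2⟩ := hnB _ (K.mul_mem hx hk) h1
    have h3 : D.n * x * D.n ∈ D.B := by
      have h4 : D.n * x * D.n = b' * b⁻¹ := by
        rw [eq_mul_inv_iff_mul_eq, mul_assoc, mul_assoc, h2, ← mul_assoc, D.n_sq, one_mul]
      rw [h4]
      exact D.B.mul_mem hb' (D.B.inv_mem hb)
    obtain ⟨u, hu, c, hc, rfl⟩ := D.B_eq x hxB
    have h5 : D.n * u * D.n ∈ D.B := by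
      have h6 := D.B.mul_mem h3 (D.C_le_B (D.n_C _ (D.C.inv_mem hc)))
      convert h6 using 1
      calc _ = D.n * u * c * (1 : G) * c⁻¹ * D.n := by group
        _ = _ := by rw [← D.n_sq]; group
    rw [D.U_n u hu h5, one_mul]
    exact hc
  have hle : Nat.card K ≤ Nat.card (Bool × D.C) := by
    refine Nat.card_le_card_of_surjective
      (fun p : Bool × D.C => if p.1 then (⟨p.2, hC p.2.2⟩ : K) else
        ⟨(D.n * b) * p.2, K.mul_mem hk (hC p.2.2)⟩) ?_
    rintro ⟨x, hx⟩
    by_cases hxB : x ∈ D.B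
    · exact ⟨⟨true, ⟨x, hKC x hx hxB⟩⟩, by simp⟩
    · obtain ⟨b', hb', rfl⟩ := hnB x hx hxB
      have h1 : (D.n * b)⁻¹ * (D.n * b') ∈ D.C := by
        apply hKC _ (K.mul_mem (K.inv_mem hk) hx)
        have : (D.n * b)⁻¹ * (D.n * b') = b⁻¹ * b' := by group
        rw [this]
        exact D.B.mul_mem (D.B.inv_mem hb) hb'
      exact ⟨⟨false, ⟨_, h1⟩⟩, by simp⟩
  rw [Nat.card_prod, D.card_C, hcard, Nat.card_eq_fintype_card, Fintype.card_bool] at hle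
  exact absurd (Nat.le_of_mul_le_mul_right hle (by omega)) (by omega)

/-- For `z ∈ Z ∖ {1}` one has `nzn ∈ z'nB` for some `z' ∈ Z ∖ {1}`. -/
theorem n_z_n {z : G} (hz : z ∈ D.Z) (hz1 : z ≠ 1) :
    ∃ z' ∈ D.Z, z' ≠ 1 ∧ ∃ b ∈ D.B, D.n * z * D.n = z' * D.n * b := by
  have h1 : D.n * z * D.n ∉ D.B := fun h => hz1 (D.U_n z (D.Z_le_U hz) h)
  have h2 : D.n * z * D.n ∈ D.M := D.M.mul_mem (D.M.mul_mem D.n_M (D.Z_le_M hz)) D.n_M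
  obtain ⟨-, z', hz', z'', hz'', c, hc, h⟩ := D.exists_of_notMem_B D.Z_le_M D.C_le_M D.U_M h2 h1
  have hb : z'' * c ∈ D.B := D.ZC_le_B (Subgroup.mul_mem_sup hz'' hc)
  refine ⟨z', hz', ?_, z'' * c, hb, h⟩
  rintro rfl
  rw [one_mul, mul_assoc] at h
  have h3 : z * D.n ∈ D.B := by
    rw [mul_left_cancel h]
    exact hb
  exact D.n_notMem ((D.B.mul_mem_cancel_left (D.U_le_B (D.Z_le_U hz))).1 h3)

/-- A subgroup of order `qr` containing `C` fixes one of the two isotropic points fixed by `C`. -/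
theorem le_B_or [Finite G] (hqr : q < r) (hq : 2 < q) {K : Subgroup G} (hC : D.C ≤ K)
    (hcard : Nat.card K = q * r) :
    K ≤ D.B ∨ K.map (MulAut.conj D.n).toMonoidHom ≤ D.B := by
  by_contra! hcon
  obtain ⟨hKB, hKB'⟩ := hcon
  have hn : D.n⁻¹ = D.n := inv_eq_of_mul_eq_one_left D.n_sq
  have hC' : D.C ≤ K.map (MulAut.conj D.n).toMonoidHom := by
    intro c hc
    refine ⟨D.n * c * D.n, hC (D.n_C c hc), ?_⟩
    simp only [MulEquiv.coe_toMonoidHom, MulAut.conj_apply, hn]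
    calc _ = (D.n * D.n) * c * (D.n * D.n) := by group
      _ = c := by rw [D.n_sq]; simp
  have hcard' : Nat.card (K.map (MulAut.conj D.n).toMonoidHom) = q * r := by
    rw [← hcard]
    exact Nat.card_congr (K.equivMapOfInjective _ (MulAut.conj D.n).injective).symm.toEquiv
  obtain ⟨z, hz, hz1, b, hb, hk⟩ := D.exists_ne_one_of_card hqr hq hC hcard hKB
  obtain ⟨w, hw, hw1, b', hb', k', hk', hkk'⟩ :=
    D.exists_ne_one_of_card hqr hq hC' hcard' hKB'
  simp only [MulEquiv.coe_toMonoidHom, MulAut.conj_apply, hn] at hkk'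
  obtain ⟨w', hw', hw1', b'', hb'', hww'⟩ := D.n_z_n hw hw1
  obtain ⟨b₃, hb₃, hk₃⟩ := D.exists_of_ne_one hC hz hz1 hb hk w' hw' hw1'
  have hk'eq : k' = w' * D.n * b'' * b' * D.n := by
    calc k' = (D.n * D.n) * k' * (D.n * D.n) := by rw [D.n_sq]; simp
      _ = D.n * (D.n * k' * D.n) * D.n := by group
      _ = (D.n * w * D.n) * b' * D.n := by rw [hkk']; group
      _ = _ := by rw [hww']
  have hmem := K.mul_mem (K.inv_mem hk') hk₃
  refine D.n_notMem_of_card (by omega) hC hcard hz hz1 hb hk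
    (b' := b'⁻¹ * b''⁻¹ * b₃) ?_ ?_
  · exact D.B.mul_mem (D.B.mul_mem (D.B.inv_mem hb') (D.B.inv_mem hb'')) hb₃
  · convert hmem using 1
    rw [hk'eq]
    have : ∀ x y : G, x * D.n * (D.n * y) = x * y := by
      intro x y
      rw [mul_assoc, ← mul_assoc D.n, D.n_sq, one_mul]
    simp only [mul_inv_rev, hn]
    calc _ = D.n * b'⁻¹ * b''⁻¹ * b₃ := by group
      _ = D.n * b'⁻¹ * b''⁻¹ * D.n * (D.n * b₃) := by rw [this]
      _ = _ := by group

theorem mobius_eq_one [Finite G] (hqr : q < r) (hq : 2 < q) {mu : Subgroup G → ℤ}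
    (hmu : IsSubgroupMobius mu) {H : Subgroup G} (hC : D.C ≤ H) (hcard : Nat.card H = q * r) :
    mu H = 1 := by
  rcases D.le_B_or hqr hq hC hcard with h | h
  · rw [D.eq_ZC_of_le_B hqr hC hcard h]
    exact D.mobius_ZC hmu
  · have hn : D.n⁻¹ = D.n := inv_eq_of_mul_eq_one_left D.n_sq
    have hnn : ∀ g, D.n * (D.n * g * D.n) * D.n = g := by
      intro g
      calc _ = (D.n * D.n) * g * (D.n * D.n) := by group
        _ = g := by rw [D.n_sq]; simp
    have hC' : D.C ≤ H.map (MulAut.conj D.n).toMonoidHom := by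
      intro c hc
      refine ⟨D.n * c * D.n, hC (D.n_C c hc), ?_⟩
      simp only [MulEquiv.coe_toMonoidHom, MulAut.conj_apply, hn]
      exact hnn c
    have hcard' : Nat.card (H.map (MulAut.conj D.n).toMonoidHom) = q * r := by
      rw [← hcard]
      exact Nat.card_congr (H.equivMapOfInjective _ (MulAut.conj D.n).injective).symm.toEquiv
    have h1 := D.mobius_ZC (mobius_comp_equiv hmu (MulAut.conj D.n))
    rw [← D.eq_ZC_of_le_B hqr hC' hcard' h] at h1
    convert h1 using 2
    ext g
    have hcc : ∀ a, D.n * (D.n * a * D.n⁻¹) * D.n⁻¹ = a := by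
      intro a
      rw [hn, hnn]
    simp [Subgroup.mem_map, hcc]

end BNData

/-! ### The quadratic extension `F_{q²} / F_q` -/

/-- `F` is the field with `q²` elements, of characteristic two with `q ≥ 4` and `q ≡ 1 mod 3`,
and its star operation is `x ↦ x ^ q`. -/
structure IsUnitaryField (F : Type*) [Field F] [StarRing F] (q : ℕ) : Prop where
  finite : Finite F
  two_eq_zero : (2 : F) = 0
  card : Nat.card F = q ^ 2
  star_eq : ∀ x : F, star x = x ^ q
  four_le : 4 ≤ q
  mod_three : q % 3 = 1

namespace IsUnitaryField

variable {F : Type*} [Field F] [StarRing F] {q : ℕ} (hF : IsUnitaryField F q)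
include hF

theorem add_self (x : F) : x + x = 0 := by linear_combination x * hF.two_eq_zero

theorem eq_of_add {x y : F} (h : x + y = 0) : x = y := by
  linear_combination h - y * hF.two_eq_zero

theorem card_fixed_le : Nat.card {y : F // star y = y} ≤ q := by
  have := hF.finite
  have := Fintype.ofFinite F
  have h4 := hF.four_le
  have hne : (Polynomial.X ^ q - Polynomial.X : Polynomial F) ≠ 0 :=
    FiniteField.X_pow_card_sub_X_ne_zero F (by omega)
  have h1 : Nat.card {y : F // star y = y} ≤
      (Polynomial.X ^ q - Polynomial.X : Polynomial F).roots.toFinset.card := by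
    rw [Nat.card_eq_fintype_card, Fintype.card_subtype]
    refine Finset.card_le_card fun y hy => ?_
    have hy' : star y = y := by simpa using hy
    simp [hne, ← hF.star_eq, hy']
  refine h1.trans ((Multiset.toFinset_card_le _).trans ((Polynomial.card_roots' _).trans ?_))
  rw [FiniteField.X_pow_card_sub_X_natDegree_eq F (by omega)]

/-- The fixed field of `star` has `q` elements and the trace maps `F` onto it: the image of the
additive map `b ↦ b + star b` lies in its kernel, which has at most `q` elements. -/
theorem trace_aux : Nat.card {y : F // star y = y} = q ∧
    ∀ y : F, star y = y → ∃ b : F, b + star b = y := by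
  have := hF.finite
  let T : F →+ F := AddMonoidHom.id F + (starRingEnd F : F →+ F)
  have hT : ∀ b, T b = b + star b := fun b => rfl
  have hker : ∀ y, y ∈ T.ker ↔ star y = y := by
    intro y
    rw [AddMonoidHom.mem_ker, hT]
    exact ⟨fun h => (hF.eq_of_add h).symm, fun h => by rw [h, hF.add_self]⟩
  have hle : T.range ≤ T.ker := by
    rintro _ ⟨b, rfl⟩
    rw [hker, hT, star_add, star_star, add_comm]
  have hcard : Nat.card T.ker = Nat.card {y : F // star y = y} :=
    Nat.card_congr (Equiv.subtypeEquivRight hker)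
  have hmul : Nat.card T.ker * Nat.card T.range = q ^ 2 := by
    rw [← hF.card, ← AddSubgroup.index_ker, AddSubgroup.card_mul_index]
  have hle' : Nat.card T.range ≤ Nat.card T.ker := AddSubgroup.card_le_of_le hle
  have hkq : Nat.card T.ker ≤ q := hcard ▸ hF.card_fixed_le
  have h4 := hF.four_le
  have hkeq : Nat.card T.ker = q := by nlinarith
  refine ⟨hcard ▸ hkeq, fun y hy => ?_⟩
  have hrange : T.range = T.ker := by
    refine AddSubgroup.eq_of_le_of_card_ge hle ?_
    rw [hkeq] at hmul ⊢
    nlinarith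
  have hy' := (hker y).2 hy
  rw [← hrange] at hy'
  exact hy'

theorem eq_one_of_sq_eq_star {t : F} (ht : t ≠ 0) (h : t ^ 2 = star t) : t = 1 := by
  have h1 : t ^ 4 = t := by
    calc t ^ 4 = (t ^ 2) ^ 2 := by ring
      _ = star (t ^ 2) := by rw [star_pow, h]
      _ = t := by rw [h, star_star]
  have h3 : t ^ 3 = 1 := by
    apply mul_left_cancel₀ ht
    linear_combination h1
  have hq : t ^ q = t := by
    have h5 : q = 3 * (q / 3) + 1 := by have := hF.mod_three; omega
    rw [h5, pow_add, pow_mul, h3]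
    simp
  rw [hF.star_eq, hq] at h
  apply mul_left_cancel₀ ht
  linear_combination h

/-- The exponent `q - 2` is prime to `q² - 1` because `q ≡ 1 mod 3`. -/
theorem exists_sq_eq_mul_star {c : F} (hc : c ≠ 0) : ∃ t : F, t ≠ 0 ∧ t ^ 2 = c * star t := by
  have := hF.finite
  let f : Fˣ →* Fˣ :=
    { toFun := fun t => t ^ 2 * (Units.map (starRingEnd F : F →* F) t)⁻¹
      map_one' := by simp
      map_mul' := by
        intro a b
        simp only [map_mul, mul_inv, mul_pow]
        exact mul_mul_mul_comm _ _ _ _ }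
  have hf : Function.Injective f := by
    rw [injective_iff_map_eq_one]
    intro t ht
    have h1 : t ^ 2 = Units.map (starRingEnd F : F →* F) t := by
      have h0 : t ^ 2 * (Units.map (starRingEnd F : F →* F) t)⁻¹ = 1 := ht
      rwa [mul_inv_eq_one] at h0
    have h2 := congrArg (Units.val) h1
    exact Units.ext (hF.eq_one_of_sq_eq_star t.ne_zero (by simpa [starRingEnd_apply] using h2))
  obtain ⟨t, ht⟩ := (Finite.injective_iff_surjective.1 hf) (Units.mk0 c hc)
  refine ⟨t, t.ne_zero, ?_⟩
  have h0 : t ^ 2 * (Units.map (starRingEnd F : F →* F) t)⁻¹ = Units.mk0 c hc := ht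
  rw [mul_inv_eq_iff_eq_mul] at h0
  simpa [starRingEnd_apply] using congrArg Units.val h0

theorem exists_sqrt {y : F} (hy : star y = y) : ∃ s : F, star s = s ∧ s * s = y := by
  have := hF.finite
  have : CharP F 2 := CharTwo.of_one_ne_zero_of_two_eq_zero one_ne_zero hF.two_eq_zero
  obtain ⟨s, rfl⟩ := FiniteField.isSquare_of_char_two (ringChar.eq F 2) y
  refine ⟨s, ?_, rfl⟩
  have h : (star s + s) * (star s + s) = 0 := by
    rw [star_mul] at hy
    linear_combination hy + (s * s + s * star s) * hF.two_eq_zero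
  exact hF.eq_of_add (mul_self_eq_zero.1 h)

theorem exists_fixed : ∃ κ : F, star κ = κ ∧ κ ≠ 0 ∧ κ ≠ 1 := by
  have := hF.finite
  by_contra! hcon
  have h : Nat.card {y : F // star y = y} ≤ Nat.card Bool := by
    refine Nat.card_le_card_of_injective (fun y => decide ((y : F) = 0)) ?_
    rintro ⟨x, hx⟩ ⟨y, hy⟩ hxy
    simp only [decide_eq_decide] at hxy
    apply Subtype.ext
    by_cases hx0 : x = 0
    · exact hx0.trans (hxy.1 hx0).symm
    · exact (hcon x hx hx0).trans (hcon y hy (fun h => hx0 (hxy.2 h))).symm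
  rw [hF.trace_aux.1, Nat.card_eq_fintype_card, Fintype.card_bool] at h
  have := hF.four_le
  omega

end IsUnitaryField

/-! ### The unitary group in hyperbolic coordinates -/

section Hyperbolic

variable {F : Type*} [Field F] [StarRing F] {q : ℕ}

/-- The Gram matrix of the Hermitian form in a basis `e₀, e₁, e₂` where `(e₀, e₂)` is a hyperbolic
pair and `e₁` is a unit vector orthogonal to it. -/
def gramJ (F : Type*) [Field F] : Matrix (Fin 3) (Fin 3) F := !![0, 0, 1; 0, 1, 0; 1, 0, 0]

/-- Membership in the special unitary group of the form with Gram matrix `gramJ`. -/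
def IsSUJ (m : Matrix (Fin 3) (Fin 3) F) : Prop :=
  m.conjTranspose * gramJ F * m = gramJ F ∧ m.det = 1

/-- The torus element `diag(t, t̄/t, t̄⁻¹)`. -/
def torMat (t : F) : Matrix (Fin 3) (Fin 3) F := !![t, 0, 0; 0, star t / t, 0; 0, 0, (star t)⁻¹]

/-- The unipotent upper triangular matrix with first row `(1, a, b)`; it is unitary exactly when
`b + b̄ = a ā` (signs being irrelevant in characteristic two). -/
def uniMat (a b : F) : Matrix (Fin 3) (Fin 3) F := !![1, a, b; 0, 1, star a; 0, 0, 1]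

theorem IsSUJ.entry {m : Matrix (Fin 3) (Fin 3) F} (hm : IsSUJ m) (i j : Fin 3) :
    star (m 2 i) * m 0 j + star (m 1 i) * m 1 j + star (m 0 i) * m 2 j = gramJ F i j := by
  have h := congrFun (congrFun hm.1 i) j
  rw [← h]
  simp [gramJ, Matrix.mul_apply, Fin.sum_univ_three]

theorem isSUJ_gramJ (hF : IsUnitaryField F q) : IsSUJ (gramJ F) := by
  have h2 := hF.two_eq_zero
  constructor
  · ext i j
    fin_cases i <;> fin_cases j <;>
      simp [gramJ, Matrix.mul_apply, Fin.sum_univ_three]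
  · simp [gramJ, Matrix.det_fin_three]
    linear_combination -h2

theorem isSUJ_torMat {t : F} (ht : t ≠ 0) : IsSUJ (torMat t) := by
  have hs : star t ≠ 0 := star_ne_zero.2 ht
  constructor
  · ext i j
    fin_cases i <;> fin_cases j <;>
      simp [torMat, gramJ, Matrix.mul_apply, Fin.sum_univ_three, ht, hs]
  · simp [torMat, Matrix.det_fin_three]
    field_simp

theorem isSUJ_uniMat (hF : IsUnitaryField F q) {a b : F} (h : b + star b = a * star a) :
    IsSUJ (uniMat a b) := by
  have h2 := hF.two_eq_zero
  constructor
  · ext i j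
    fin_cases i <;> fin_cases j <;>
      simp [uniMat, gramJ, Matrix.mul_apply, Fin.sum_univ_three]
    · linear_combination star a * h2
    · linear_combination a * h2
    · linear_combination h + a * star a * h2
  · simp [uniMat, Matrix.det_fin_three]

/-- A coordinatization of `G` as the special unitary group of the form `gramJ`. -/
structure SUJModel (G F : Type*) [Group G] [Field F] [StarRing F] where
  /-- The faithful matrix representation. -/
  ψ : G →* Matrix (Fin 3) (Fin 3) F
  inj : Function.Injective ψ
  isSUJ : ∀ g, IsSUJ (ψ g)
  surj : ∀ m, IsSUJ m → ∃ g, ψ g = m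

namespace SUJModel

variable {G : Type*} [Group G] (S : SUJModel G F)

theorem entry (g : G) (i j : Fin 3) : star (S.ψ g 2 i) * S.ψ g 0 j + star (S.ψ g 1 i) * S.ψ g 1 j
    + star (S.ψ g 0 i) * S.ψ g 2 j = gramJ F i j := (S.isSUJ g).entry i j

theorem det_eq (g : G) : S.ψ g 0 0 * S.ψ g 1 1 * S.ψ g 2 2 - S.ψ g 0 0 * S.ψ g 1 2 * S.ψ g 2 1
    - S.ψ g 0 1 * S.ψ g 1 0 * S.ψ g 2 2 + S.ψ g 0 1 * S.ψ g 1 2 * S.ψ g 2 0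
    + S.ψ g 0 2 * S.ψ g 1 0 * S.ψ g 2 1 - S.ψ g 0 2 * S.ψ g 1 1 * S.ψ g 2 0 = 1 := by
  rw [← Matrix.det_fin_three]
  exact (S.isSUJ g).2

theorem mul_entry (g h : G) (i j : Fin 3) : S.ψ (g * h) i j =
    S.ψ g i 0 * S.ψ h 0 j + S.ψ g i 1 * S.ψ h 1 j + S.ψ g i 2 * S.ψ h 2 j := by
  rw [map_mul, Matrix.mul_apply, Fin.sum_univ_three]

omit [StarRing F] in
theorem gramJ_mul_gramJ : gramJ F * gramJ F = 1 := by
  ext i j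
  fin_cases i <;> fin_cases j <;> simp [gramJ]

omit [StarRing F] in
theorem gramJ_mul_mul_gramJ (m : Matrix (Fin 3) (Fin 3) F) (i j : Fin 3) :
    (gramJ F * m * gramJ F) i j = m (2 - i) (2 - j) := by
  have h1 : ∀ (m : Matrix (Fin 3) (Fin 3) F) (i j : Fin 3), (gramJ F * m) i j = m (2 - i) j := by
    intro m i j
    rw [Matrix.mul_apply, Fin.sum_univ_three]
    fin_cases i <;> simp [gramJ]
  have h2 : ∀ (m : Matrix (Fin 3) (Fin 3) F) (i j : Fin 3), (m * gramJ F) i j = m i (2 - j) := by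
    intro m i j
    rw [Matrix.mul_apply, Fin.sum_univ_three]
    fin_cases j <;> simp [gramJ]
  rw [h2, h1]

/-- `m⁻¹ = J m* J` for unitary `m`, so inversion conjugates entries and reflects positions in the
antidiagonal. -/
theorem inv_entry (g : G) (i j : Fin 3) : S.ψ g⁻¹ i j = star (S.ψ g (2 - j) (2 - i)) := by
  have h1 : gramJ F * (S.ψ g).conjTranspose * gramJ F * S.ψ g = 1 := by
    rw [Matrix.mul_assoc, Matrix.mul_assoc, ← Matrix.mul_assoc (S.ψ g).conjTranspose,
      (S.isSUJ g).1, gramJ_mul_gramJ]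
  have h2 : S.ψ g * S.ψ g⁻¹ = 1 := by rw [← map_mul, mul_inv_cancel, map_one]
  have h3 : S.ψ g⁻¹ = gramJ F * (S.ψ g).conjTranspose * gramJ F := by
    calc S.ψ g⁻¹ = (gramJ F * (S.ψ g).conjTranspose * gramJ F * S.ψ g) * S.ψ g⁻¹ := by
          rw [h1, Matrix.one_mul]
      _ = _ := by rw [Matrix.mul_assoc, h2, Matrix.mul_one]
  rw [h3, gramJ_mul_mul_gramJ, Matrix.conjTranspose_apply]

/-- The stabilizer of the isotropic point `⟨e₀⟩`. -/
def borel : Subgroup G where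
  carrier := {g | S.ψ g 1 0 = 0 ∧ S.ψ g 2 0 = 0 ∧ S.ψ g 2 1 = 0}
  one_mem' := by simp
  mul_mem' := by
    rintro a b ⟨h1, h2, h3⟩ ⟨k1, k2, k3⟩
    simp [mul_entry, *]
  inv_mem' := by
    rintro a ⟨h1, h2, h3⟩
    simp [inv_entry, *]

/-- The unipotent radical of `borel`. -/
def unip : Subgroup G where
  carrier := {g | (S.ψ g 1 0 = 0 ∧ S.ψ g 2 0 = 0 ∧ S.ψ g 2 1 = 0) ∧
    S.ψ g 0 0 = 1 ∧ S.ψ g 1 1 = 1 ∧ S.ψ g 2 2 = 1}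
  one_mem' := by simp
  mul_mem' := by
    rintro a b ⟨⟨h1, h2, h3⟩, h4, h5, h6⟩ ⟨⟨k1, k2, k3⟩, k4, k5, k6⟩
    simp [mul_entry, *]
  inv_mem' := by
    rintro a ⟨⟨h1, h2, h3⟩, h4, h5, h6⟩
    simp [inv_entry, *]

/-- The unitary transvections with centre `⟨e₀⟩`. -/
def transv : Subgroup G where
  carrier := {g | (S.ψ g 1 0 = 0 ∧ S.ψ g 2 0 = 0 ∧ S.ψ g 2 1 = 0) ∧
    (S.ψ g 0 0 = 1 ∧ S.ψ g 1 1 = 1 ∧ S.ψ g 2 2 = 1) ∧ S.ψ g 0 1 = 0 ∧ S.ψ g 1 2 = 0}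
  one_mem' := by simp
  mul_mem' := by
    rintro a b ⟨⟨h1, h2, h3⟩, ⟨h4, h5, h6⟩, h7, h8⟩ ⟨⟨k1, k2, k3⟩, ⟨k4, k5, k6⟩, k7, k8⟩
    simp [mul_entry, *]
  inv_mem' := by
    rintro a ⟨⟨h1, h2, h3⟩, ⟨h4, h5, h6⟩, h7, h8⟩
    simp [inv_entry, *]

/-- The diagonal torus. -/
def torus : Subgroup G where
  carrier := {g | (S.ψ g 1 0 = 0 ∧ S.ψ g 2 0 = 0 ∧ S.ψ g 2 1 = 0) ∧
    S.ψ g 0 1 = 0 ∧ S.ψ g 0 2 = 0 ∧ S.ψ g 1 2 = 0}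
  one_mem' := by simp
  mul_mem' := by
    rintro a b ⟨⟨h1, h2, h3⟩, h4, h5, h6⟩ ⟨⟨k1, k2, k3⟩, k4, k5, k6⟩
    simp [mul_entry, *]
  inv_mem' := by
    rintro a ⟨⟨h1, h2, h3⟩, h4, h5, h6⟩
    simp [inv_entry, *]

/-- The stabilizer of the non-isotropic point `⟨e₁⟩`. -/
def levi : Subgroup G where
  carrier := {g | S.ψ g 0 1 = 0 ∧ S.ψ g 1 0 = 0 ∧ S.ψ g 1 2 = 0 ∧ S.ψ g 2 1 = 0}
  one_mem' := by simp
  mul_mem' := by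
    rintro a b ⟨h1, h2, h3, h4⟩ ⟨k1, k2, k3, k4⟩
    simp [mul_entry, *]
  inv_mem' := by
    rintro a ⟨h1, h2, h3, h4⟩
    simp [inv_entry, *]

variable {S}

theorem mem_borel {g : G} : g ∈ S.borel ↔ S.ψ g 1 0 = 0 ∧ S.ψ g 2 0 = 0 ∧ S.ψ g 2 1 = 0 := Iff.rfl

theorem mem_unip {g : G} : g ∈ S.unip ↔ (S.ψ g 1 0 = 0 ∧ S.ψ g 2 0 = 0 ∧ S.ψ g 2 1 = 0) ∧
    S.ψ g 0 0 = 1 ∧ S.ψ g 1 1 = 1 ∧ S.ψ g 2 2 = 1 := Iff.rfl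

theorem mem_transv {g : G} : g ∈ S.transv ↔ (S.ψ g 1 0 = 0 ∧ S.ψ g 2 0 = 0 ∧ S.ψ g 2 1 = 0) ∧
    (S.ψ g 0 0 = 1 ∧ S.ψ g 1 1 = 1 ∧ S.ψ g 2 2 = 1) ∧ S.ψ g 0 1 = 0 ∧ S.ψ g 1 2 = 0 := Iff.rfl

theorem mem_torus {g : G} : g ∈ S.torus ↔ (S.ψ g 1 0 = 0 ∧ S.ψ g 2 0 = 0 ∧ S.ψ g 2 1 = 0) ∧
    S.ψ g 0 1 = 0 ∧ S.ψ g 0 2 = 0 ∧ S.ψ g 1 2 = 0 := Iff.rfl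

theorem mem_levi {g : G} : g ∈ S.levi ↔
    S.ψ g 0 1 = 0 ∧ S.ψ g 1 0 = 0 ∧ S.ψ g 1 2 = 0 ∧ S.ψ g 2 1 = 0 := Iff.rfl

theorem ext_entries {g h : G} (H : ∀ i j, S.ψ g i j = S.ψ h i j) : g = h :=
  S.inj (Matrix.ext H)

theorem mem_unip_iff (hF : IsUnitaryField F q) {g : G} :
    g ∈ S.unip ↔ ∃ a b, b + star b = a * star a ∧ S.ψ g = uniMat a b := by
  rw [mem_unip]
  constructor
  · rintro ⟨⟨h1, h2, h3⟩, h4, h5, h6⟩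
    have e1 := S.entry g 2 1
    have e2 := S.entry g 2 2
    simp only [h3, h5, h6] at e1 e2
    simp only [gramJ, star_one, one_mul, mul_one, mul_zero, add_zero] at e1 e2
    have h7 : S.ψ g 1 2 = star (S.ψ g 0 1) := by
      have : S.ψ g 0 1 + star (S.ψ g 1 2) = 0 := by simpa using e1
      rw [hF.eq_of_add this, star_star]
    refine ⟨S.ψ g 0 1, S.ψ g 0 2, ?_, ?_⟩
    · rw [h7] at e2
      have e3 : S.ψ g 0 2 + S.ψ g 0 1 * star (S.ψ g 0 1) + star (S.ψ g 0 2) = 0 := by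
        simpa using e2
      linear_combination e3 - S.ψ g 0 1 * star (S.ψ g 0 1) * hF.two_eq_zero
    · ext i j
      fin_cases i <;> fin_cases j <;> simp [uniMat, *]
  · rintro ⟨a, b, -, h⟩
    simp [h, uniMat]

theorem mem_transv_iff (hF : IsUnitaryField F q) {g : G} :
    g ∈ S.transv ↔ ∃ b, star b = b ∧ S.ψ g = uniMat 0 b := by
  constructor
  · intro h
    obtain ⟨a, b, hab, hg⟩ := (mem_unip_iff hF).1 (mem_unip.2 ⟨h.1, h.2.1⟩)
    have ha : a = 0 := by
      have := h.2.2.1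
      rw [hg] at this
      simpa [uniMat] using this
    subst ha
    refine ⟨b, ?_, hg⟩
    rw [zero_mul] at hab
    exact (hF.eq_of_add hab).symm
  · rintro ⟨b, -, h⟩
    rw [mem_transv]
    simp [h, uniMat]

theorem mem_torus_iff {g : G} : g ∈ S.torus ↔ ∃ t, t ≠ 0 ∧ S.ψ g = torMat t := by
  rw [mem_torus]
  constructor
  · rintro ⟨⟨h1, h2, h3⟩, h4, h5, h6⟩
    have e1 := S.entry g 0 2
    have e2 := S.det_eq g
    simp only [h1, h2, h3, h4, h5, h6] at e1 e2
    have e3 : star (S.ψ g 0 0) * S.ψ g 2 2 = 1 := by simpa [gramJ] using e1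
    have e4 : S.ψ g 0 0 * S.ψ g 1 1 * S.ψ g 2 2 = 1 := by simpa using e2
    have ht : S.ψ g 0 0 ≠ 0 := by
      intro h
      simp [h] at e4
    have hs : star (S.ψ g 0 0) ≠ 0 := star_ne_zero.2 ht
    have h7 : S.ψ g 2 2 = (star (S.ψ g 0 0))⁻¹ := by
      field_simp
      linear_combination e3
    have h8 : S.ψ g 1 1 = star (S.ψ g 0 0) / S.ψ g 0 0 := by
      rw [h7] at e4
      field_simp at e4 ⊢
      linear_combination e4
    refine ⟨S.ψ g 0 0, ht, ?_⟩
    ext i j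
    fin_cases i <;> fin_cases j <;> simp [torMat, *]
  · rintro ⟨t, -, h⟩
    simp [h, torMat]

/-- An element fixing `⟨e₀⟩` is upper triangular: it also preserves the polar line. -/
theorem mem_borel_of_col {g : G} (h1 : S.ψ g 1 0 = 0) (h2 : S.ψ g 2 0 = 0) : g ∈ S.borel := by
  refine ⟨h1, h2, ?_⟩
  have e := S.entry g 0 1
  have hd := S.det_eq g
  rw [h1, h2] at e hd
  have e' : star (S.ψ g 0 0) * S.ψ g 2 1 = 0 := by simpa [gramJ] using e
  rcases mul_eq_zero.1 e' with h | h
  · rw [star_eq_zero] at h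
    simp [h] at hd
  · exact h

theorem uniMat_mul (a b a' b' : F) :
    uniMat a (star b) * uniMat a' b' = uniMat (a + a') (b' + a * star a' + star b) := by
  ext i j
  fin_cases i <;> fin_cases j <;>
    simp [uniMat, Matrix.mul_apply, Fin.sum_univ_three] <;> ring

theorem torMat_mul_uniMat {t : F} (ht : t ≠ 0) (a b : F) :
    torMat t * uniMat a b = uniMat (a * (t ^ 2 / star t)) (b * (t * star t)) * torMat t := by
  have hs : star t ≠ 0 := star_ne_zero.2 ht
  ext i j
  fin_cases i <;> fin_cases j <;>
    simp [uniMat, torMat, Matrix.mul_apply, Fin.sum_univ_three] <;> field_simp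

theorem uniMat_inj {a b a' b' : F} (h : uniMat a b = uniMat a' b') : a = a' ∧ b = b' := by
  constructor
  · simpa [uniMat] using congrFun (congrFun h 0) 1
  · simpa [uniMat] using congrFun (congrFun h 0) 2

theorem torMat_inj {t t' : F} (h : torMat t = torMat t') : t = t' := by
  simpa [torMat] using congrFun (congrFun h 0) 0

theorem torMat_one : torMat (1 : F) = 1 := by
  ext i j
  fin_cases i <;> fin_cases j <;> simp [torMat]

theorem uniMat_zero : uniMat (0 : F) 0 = 1 := by
  ext i j
  fin_cases i <;> fin_cases j <;> simp [uniMat]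

/-- Conjugation of `uniMat a b` by `torMat t`. -/
theorem conj_eq_iff {c u u' : G} {t a b : F} (ht : t ≠ 0) (hc : S.ψ c = torMat t)
    (hu : S.ψ u = uniMat a b) :
    c * u * c⁻¹ = u' ↔ S.ψ u' = uniMat (a * (t ^ 2 / star t)) (b * (t * star t)) := by
  rw [mul_inv_eq_iff_eq_mul, ← S.inj.eq_iff, map_mul, map_mul, hc, hu, torMat_mul_uniMat ht]
  constructor
  · intro h
    have hinv : torMat t * S.ψ c⁻¹ = 1 := by rw [← hc, ← map_mul, mul_inv_cancel, map_one]
    have h' := congrArg (· * S.ψ c⁻¹) h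
    simp only [Matrix.mul_assoc, hinv, Matrix.mul_one] at h'
    exact h'.symm
  · intro h
    rw [h]

theorem inv_uniMat {u : G} {a b : F} (hu : S.ψ u = uniMat a b) : S.ψ u⁻¹ = uniMat a (star b) := by
  ext i j
  rw [S.inv_entry, hu]
  fin_cases i <;> fin_cases j <;> simp [uniMat]

variable (S)

theorem bruhat (hF : IsUnitaryField F q) {n : G} (hn : S.ψ n = gramJ F) (g : G)
    (hg : g ∉ S.borel) : ∃ u ∈ S.unip, ∃ b ∈ S.borel, g = u * n * b := by
  have h2 := hF.two_eq_zero
  have e := S.entry g 0 0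
  have hz : S.ψ g 2 0 ≠ 0 := by
    intro hz
    rw [hz] at e
    have hy : S.ψ g 1 0 = 0 := by simpa [gramJ] using e
    exact hg (mem_borel_of_col hy hz)
  have hsz : star (S.ψ g 2 0) ≠ 0 := star_ne_zero.2 hz
  obtain ⟨u, hu⟩ := S.surj _ (isSUJ_uniMat hF
    (a := star (S.ψ g 1 0 / S.ψ g 2 0)) (b := S.ψ g 0 0 / S.ψ g 2 0) (by
      simp only [star_div₀, star_star]
      have e' : star (S.ψ g 2 0) * S.ψ g 0 0 + star (S.ψ g 1 0) * S.ψ g 1 0 +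
        star (S.ψ g 0 0) * S.ψ g 2 0 = 0 := by simpa [gramJ] using e
      field_simp
      linear_combination e' - star (S.ψ g 1 0) * S.ψ g 1 0 * h2))
  have hnn : n * n = 1 := by
    refine ext_entries (S := S) fun i j => ?_
    rw [mul_entry, hn]
    fin_cases i <;> fin_cases j <;> simp [gramJ]
  have hn' : n⁻¹ = n := inv_eq_of_mul_eq_one_left hnn
  refine ⟨u, (mem_unip_iff hF).2 ⟨_, _, ?_, hu⟩, n * (u⁻¹ * g), ?_, ?_⟩
  · have := (S.isSUJ u).entry 2 2
    rw [hu] at this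
    have h3 : S.ψ g 0 0 / S.ψ g 2 0 + star (S.ψ g 1 0 / S.ψ g 2 0) * (S.ψ g 1 0 / S.ψ g 2 0) +
        star (S.ψ g 0 0 / S.ψ g 2 0) = 0 := by
      simpa [uniMat, gramJ] using this
    rw [star_star]
    linear_combination h3 - S.ψ g 1 0 / S.ψ g 2 0 * star (S.ψ g 1 0 / S.ψ g 2 0) * h2
  · have hcol : ∀ i, S.ψ (u⁻¹ * g) i 0 = S.ψ g 2 0 * S.ψ (u⁻¹ * u) i 2 := by
      intro i
      rw [mul_entry, mul_entry, hu]
      simp [uniMat]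
      field_simp
    simp only [inv_mul_cancel, map_one] at hcol
    apply mem_borel_of_col
    · rw [mul_entry, hn]
      simp [gramJ, hcol]
    · rw [mul_entry, hn]
      simp [gramJ, hcol]
  · calc g = u * 1 * (u⁻¹ * g) := by group
      _ = u * (n * n) * (u⁻¹ * g) := by rw [hnn]
      _ = _ := by group

/-! ### The flag stabilizer data of the unitary group -/

variable {S}

theorem nmn_entry {n : G} (hn : S.ψ n = gramJ F) (g : G) (i j : Fin 3) :
    S.ψ (n * g * n) i j = S.ψ g (2 - i) (2 - j) := by
  rw [map_mul, map_mul, hn, gramJ_mul_mul_gramJ]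

theorem eq_one_of_entries {g : G} (h : S.ψ g = 1) : g = 1 :=
  S.inj (h.trans (map_one S.ψ).symm)

theorem n_mul_n {n : G} (hn : S.ψ n = gramJ F) : n * n = 1 :=
  eq_one_of_entries (S := S) (by rw [map_mul, hn, gramJ_mul_gramJ])

theorem borel_diag {b : G} (hb : b ∈ S.borel) :
    S.ψ b 0 0 * S.ψ b⁻¹ 0 0 = 1 ∧ S.ψ b 1 1 * S.ψ b⁻¹ 1 1 = 1 ∧ S.ψ b 2 2 * S.ψ b⁻¹ 2 2 = 1 := by
  have hb' := S.borel.inv_mem hb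
  rw [mem_borel] at hb hb'
  obtain ⟨h1, h2, h3⟩ := hb
  obtain ⟨k1, k2, k3⟩ := hb'
  have key : ∀ i, S.ψ (b * b⁻¹) i i = 1 := fun i => by simp
  have e0 := key 0
  have e1 := key 1
  have e2 := key 2
  rw [mul_entry, k1, k2] at e0
  rw [mul_entry, h1, k3] at e1
  rw [mul_entry, h2, h3] at e2
  exact ⟨by simpa using e0, by simpa using e1, by simpa using e2⟩

theorem borel_eq {b : G} (hb : b ∈ S.borel) : ∃ u ∈ S.unip, ∃ c ∈ S.torus, b = u * c := by
  obtain ⟨d0, d1, d2⟩ := borel_diag hb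
  have ht : S.ψ b 0 0 ≠ 0 := left_ne_zero_of_mul_eq_one d0
  have hs : star (S.ψ b 0 0) ≠ 0 := star_ne_zero.2 ht
  have hdet := S.det_eq b
  have hb0 := mem_borel.1 hb
  rw [hb0.1, hb0.2.1, hb0.2.2] at hdet
  have hdet' : S.ψ b 0 0 * S.ψ b 1 1 * S.ψ b 2 2 = 1 := by simpa using hdet
  have d2' : S.ψ b 2 2 * star (S.ψ b 0 0) = 1 := by
    rw [S.inv_entry] at d2
    simpa using d2
  obtain ⟨c, hc⟩ := S.surj _ (isSUJ_torMat ht)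
  have hcT : c ∈ S.torus := mem_torus_iff.2 ⟨_, ht, hc⟩
  refine ⟨b * c⁻¹, mem_unip.2 ⟨?_, ?_, ?_, ?_⟩, c, hcT, by group⟩
  · exact mem_borel.1 (S.borel.mul_mem hb (S.borel.inv_mem (mem_borel.2 (mem_torus.1 hcT).1)))
  · rw [mul_entry]
    simp [S.inv_entry, hc, torMat, ht]
  · rw [mul_entry]
    simp [S.inv_entry, hc, torMat]
    field_simp
    linear_combination star (S.ψ b 0 0) * hdet' - S.ψ b 0 0 * S.ψ b 1 1 * d2'
  · rw [mul_entry]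
    simp [S.inv_entry, hc, torMat, hb0]
    exact d2'

theorem transv_normal (hF : IsUnitaryField F q) {b z : G} (hb : b ∈ S.borel)
    (hz : z ∈ S.transv) : b * z * b⁻¹ ∈ S.transv := by
  obtain ⟨y, hy, hzy⟩ := (mem_transv_iff hF).1 hz
  have d2 := (borel_diag hb).2.2
  have d2' : S.ψ b 2 2 * star (S.ψ b 0 0) = 1 := by
    rw [S.inv_entry] at d2
    simpa using d2
  have hy' : star (y * (S.ψ b 0 0 * star (S.ψ b 0 0))) = y * (S.ψ b 0 0 * star (S.ψ b 0 0)) := by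
    simp only [star_mul', star_star, hy]
    ring
  obtain ⟨z', hz'⟩ := S.surj _ (isSUJ_uniMat hF (a := 0)
    (b := y * (S.ψ b 0 0 * star (S.ψ b 0 0))) (by rw [hy', hF.add_self, zero_mul]))
  have key : b * z = z' * b := by
    refine ext_entries (S := S) fun i j => ?_
    rw [mul_entry, mul_entry, hzy, hz']
    obtain ⟨h1, h2, h3⟩ := mem_borel.1 hb
    fin_cases i <;> fin_cases j <;> simp [uniMat, h1, h2, h3]
    linear_combination -y * S.ψ b 0 0 * d2'
  rw [key, mul_inv_cancel_right]
  exact (mem_transv_iff hF).2 ⟨_, hy', hz'⟩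

theorem unip_normal {b u : G} (hb : b ∈ S.borel) (hu : u ∈ S.unip) : b * u * b⁻¹ ∈ S.unip := by
  obtain ⟨hu1, hu2⟩ := mem_unip.1 hu
  obtain ⟨d0, d1, d2⟩ := borel_diag hb
  have hb' := S.borel.inv_mem hb
  refine mem_unip.2 ⟨mem_borel.1 (S.borel.mul_mem (S.borel.mul_mem hb hu1) hb'), ?_⟩
  obtain ⟨h1, h2, h3⟩ := mem_borel.1 hb
  obtain ⟨k1, k2, k3⟩ := mem_borel.1 hb'
  simp only [mul_entry, h1, h2, h3, k1, k2, k3, hu1, hu2]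
  exact ⟨by simpa using d0, by simpa using d1, by simpa using d2⟩

theorem eq_one_of_mem_unip {u : G} (hu : u ∈ S.unip)
    (h : S.ψ u 0 1 = 0 ∧ S.ψ u 0 2 = 0 ∧ S.ψ u 1 2 = 0) : u = 1 := by
  obtain ⟨⟨h1, h2, h3⟩, h4, h5, h6⟩ := mem_unip.1 hu
  refine eq_one_of_entries (S := S) ?_
  ext i j
  fin_cases i <;> fin_cases j <;> simp [*]

theorem mem_transv_of_uniMat {g : G} {b : F} (h : S.ψ g = uniMat 0 b) : g ∈ S.transv := by
  rw [mem_transv]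
  simp [h, uniMat]

theorem exists_of_notMem_transv (hF : IsUnitaryField F q) {u : G} (hu : u ∈ S.unip)
    (huZ : u ∉ S.transv) :
    ∃ a b, a ≠ 0 ∧ b + star b = a * star a ∧ S.ψ u = uniMat a b := by
  obtain ⟨a, b, hab, h⟩ := (mem_unip_iff hF).1 hu
  refine ⟨a, b, ?_, hab, h⟩
  rintro rfl
  exact huZ (mem_transv_of_uniMat h)

theorem torus_trans (hF : IsUnitaryField F q) {u u' : G} (hu : u ∈ S.unip) (huZ : u ∉ S.transv)
    (hu' : u' ∈ S.unip) (huZ' : u' ∉ S.transv) :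
    ∃ c ∈ S.torus, ∃ z ∈ S.transv, u' = c * u * c⁻¹ * z := by
  obtain ⟨a, b, ha, hab, h⟩ := exists_of_notMem_transv hF hu huZ
  obtain ⟨a', b', ha', hab', h'⟩ := exists_of_notMem_transv hF hu' huZ'
  obtain ⟨t, ht, hta⟩ := hF.exists_sq_eq_mul_star (div_ne_zero ha' ha)
  obtain ⟨c, hc⟩ := S.surj _ (isSUJ_torMat ht)
  have hs : star t ≠ 0 := star_ne_zero.2 ht
  have h1 := (conj_eq_iff ht hc h).1 rfl
  have h2 : a * (t ^ 2 / star t) = a' := by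
    rw [hta]
    field_simp
  rw [h2] at h1
  refine ⟨c, mem_torus_iff.2 ⟨t, ht, hc⟩, (c * u * c⁻¹)⁻¹ * u', ?_, by group⟩
  have h3 := inv_uniMat h1
  have h4 : S.ψ ((c * u * c⁻¹)⁻¹ * u') = uniMat a' (star (b * (t * star t))) * uniMat a' b' := by
    rw [map_mul, h3, h']
  rw [uniMat_mul, hF.add_self] at h4
  exact mem_transv_of_uniMat h4

theorem torus_free (hF : IsUnitaryField F q) {u c : G} (hu : u ∈ S.unip) (huZ : u ∉ S.transv)
    (hc : c ∈ S.torus) (h : c * u * c⁻¹ = u) : c = 1 := by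
  obtain ⟨a, b, ha, hab, hu'⟩ := exists_of_notMem_transv hF hu huZ
  obtain ⟨t, ht, hct⟩ := mem_torus_iff.1 hc
  have hs : star t ≠ 0 := star_ne_zero.2 ht
  have h1 := (conj_eq_iff ht hct hu').1 h
  rw [hu'] at h1
  have h2 := (uniMat_inj h1).1
  have h3 : t = 1 := by
    apply hF.eq_one_of_sq_eq_star ht
    field_simp at h2
    exact h2.symm
  refine eq_one_of_entries (S := S) ?_
  rw [hct, h3, torMat_one]

theorem torus_transZ (hF : IsUnitaryField F q) {z z' : G} (hz : z ∈ S.transv) (hz1 : z ≠ 1)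
    (hz' : z' ∈ S.transv) (hz1' : z' ≠ 1) : ∃ c ∈ S.torus, c * z * c⁻¹ = z' := by
  obtain ⟨y, hy, h⟩ := (mem_transv_iff hF).1 hz
  obtain ⟨y', hy', h'⟩ := (mem_transv_iff hF).1 hz'
  have hy0 : y ≠ 0 := by
    rintro rfl
    exact hz1 (eq_one_of_entries (S := S) (by rw [h, uniMat_zero]))
  have hy0' : y' ≠ 0 := by
    rintro rfl
    exact hz1' (eq_one_of_entries (S := S) (by rw [h', uniMat_zero]))
  obtain ⟨s, hs, hsq⟩ := hF.exists_sqrt (y := y' / y) (by rw [star_div₀, hy, hy'])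
  have hs0 : s ≠ 0 := by
    rintro rfl
    rw [mul_zero] at hsq
    exact div_ne_zero hy0' hy0 hsq.symm
  obtain ⟨c, hc⟩ := S.surj _ (isSUJ_torMat hs0)
  refine ⟨c, mem_torus_iff.2 ⟨s, hs0, hc⟩, (conj_eq_iff hs0 hc h).2 ?_⟩
  rw [h', hs, hsq, zero_mul]
  congr 1
  field_simp

/-- The `SL₂` identity `x(κ) y(κ⁻¹) x(κ) = (0, κ; κ⁻¹, 0)` for opposite root groups in
characteristic two. -/
theorem weyl_elt (hF : IsUnitaryField F q) {n z z' : G} {κ : F} (hκ : κ ≠ 0)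
    (hn : S.ψ n = gramJ F) (hz : S.ψ z = uniMat 0 κ) (hz' : S.ψ z' = uniMat 0 κ⁻¹) :
    S.ψ (z * (n * z' * n) * z) = !![0, 0, κ; 0, 1, 0; κ⁻¹, 0, 0] := by
  ext i j
  simp only [S.mul_entry z, S.mul_entry _ z, nmn_entry hn, hz, hz']
  have h2 := hF.add_self 1
  fin_cases i <;> fin_cases j <;> simp [uniMat, hκ, h2]

theorem tor_mem (hF : IsUnitaryField F q) {n d : G} {κ : F} (hκ : star κ = κ) (hκ0 : κ ≠ 0)
    (hn : S.ψ n = gramJ F) (hd : S.ψ d = torMat κ) (K : Subgroup G) (hZ : S.transv ≤ K)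
    (hnZ : ∀ z ∈ S.transv, n * z * n ∈ K) : d ∈ K := by
  have ex : ∀ y : F, star y = y → ∃ z, S.ψ z = uniMat 0 y := fun y hy =>
    S.surj _ (isSUJ_uniMat hF (by rw [hy, hF.add_self, zero_mul]))
  obtain ⟨z₁, h₁⟩ := ex κ hκ
  obtain ⟨z₂, h₂⟩ := ex κ⁻¹ (by rw [star_inv₀, hκ])
  obtain ⟨z₃, h₃⟩ := ex 1 (star_one F)
  have k : ∀ {z : G} {y : F}, S.ψ z = uniMat 0 y → z ∈ K ∧ n * z * n ∈ K := fun h =>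
    ⟨hZ (mem_transv_of_uniMat h), hnZ _ (mem_transv_of_uniMat h)⟩
  have hd' : d = z₁ * (n * z₂ * n) * z₁ * (z₃ * (n * z₃ * n) * z₃) := by
    refine ext_entries (S := S) fun i j => ?_
    rw [S.mul_entry (z₁ * (n * z₂ * n) * z₁), weyl_elt hF hκ0 hn h₁ h₂,
      weyl_elt hF one_ne_zero hn h₃ (by rw [inv_one]; exact h₃), hd]
    fin_cases i <;> fin_cases j <;> simp [torMat, hκ, hκ0]
  rw [hd']
  exact K.mul_mem (K.mul_mem (K.mul_mem (k h₁).1 (k h₂).2) (k h₁).1)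
    (K.mul_mem (K.mul_mem (k h₃).1 (k h₃).2) (k h₃).1)

theorem tor_comm (hF : IsUnitaryField F q) {u d : G} {κ : F} (hκ : star κ = κ) (hκ0 : κ ≠ 0)
    (hκ1 : κ ≠ 1) (hd : S.ψ d = torMat κ) (hu : u ∈ S.unip) (huZ : u ∉ S.transv) :
    u * d * u⁻¹ * d⁻¹ ∉ S.transv := by
  obtain ⟨a, b, ha, hab, hu'⟩ := exists_of_notMem_transv hF hu huZ
  intro h
  have h1 := (conj_eq_iff hκ0 hd (inv_uniMat hu')).1 rfl
  have h2 := (mem_transv.1 h).2.2.1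
  rw [show u * d * u⁻¹ * d⁻¹ = u * (d * u⁻¹ * d⁻¹) by group, mul_entry, h1, hu', hκ] at h2
  have h3 : a * (κ ^ 2 / κ) + a = 0 := by simpa [uniMat] using h2
  have h4 := hF.eq_of_add h3
  field_simp at h4
  exact hκ1 h4

theorem not_unip_le_levi (hF : IsUnitaryField F q) : ¬ S.unip ≤ S.levi := by
  obtain ⟨b, hb⟩ := hF.trace_aux.2 1 (star_one F)
  have hb' : b + star b = 1 * star 1 := by rw [hb, star_one, one_mul]
  obtain ⟨u, hu⟩ := S.surj _ (isSUJ_uniMat hF hb')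
  intro h
  have := (mem_levi.1 (h ((mem_unip_iff hF).2 ⟨1, b, hb', hu⟩))).1
  simp [hu, uniMat] at this

theorem card_transv (hF : IsUnitaryField F q) : Nat.card S.transv = q := by
  rw [← hF.trace_aux.1]
  have hfix : ∀ z ∈ S.transv, star (S.ψ z 0 2) = S.ψ z 0 2 := by
    intro z hz
    obtain ⟨y, hy, h⟩ := (mem_transv_iff hF).1 hz
    simpa [h, uniMat] using hy
  refine Nat.card_congr (Equiv.ofBijective (fun z => ⟨S.ψ z.1 0 2, hfix z.1 z.2⟩) ⟨?_, ?_⟩)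
  · rintro ⟨z, hz⟩ ⟨z', hz'⟩ h
    obtain ⟨y, hy, e⟩ := (mem_transv_iff hF).1 hz
    obtain ⟨y', hy', e'⟩ := (mem_transv_iff hF).1 hz'
    have h' : S.ψ z 0 2 = S.ψ z' 0 2 := congrArg Subtype.val h
    have hyy : y = y' := by simpa [e, e', uniMat] using h'
    exact Subtype.ext (S.inj (by rw [e, e', hyy]))
  · rintro ⟨y, hy⟩
    obtain ⟨z, hz⟩ := S.surj _ (isSUJ_uniMat hF (a := 0) (b := y) (by
      rw [hy, hF.add_self, zero_mul]))
    exact ⟨⟨z, mem_transv_of_uniMat hz⟩, Subtype.ext (by simp [hz, uniMat])⟩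

theorem card_torus (hF : IsUnitaryField F q) : Nat.card S.torus = q ^ 2 - 1 := by
  have := hF.finite
  have hne : ∀ c ∈ S.torus, S.ψ c 0 0 ≠ 0 := by
    intro c hc
    obtain ⟨t, ht, h⟩ := mem_torus_iff.1 hc
    simpa [h, torMat] using ht
  rw [← hF.card, ← Nat.card_units, Nat.card_congr unitsEquivNeZero]
  refine Nat.card_congr (Equiv.ofBijective (fun c => ⟨S.ψ c.1 0 0, hne c.1 c.2⟩) ⟨?_, ?_⟩)
  · rintro ⟨c, hc⟩ ⟨c', hc'⟩ h
    obtain ⟨t, ht, e⟩ := mem_torus_iff.1 hc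
    obtain ⟨t', ht', e'⟩ := mem_torus_iff.1 hc'
    have h' : S.ψ c 0 0 = S.ψ c' 0 0 := congrArg Subtype.val h
    have htt : t = t' := by simpa [e, e', torMat] using h'
    exact Subtype.ext (S.inj (by rw [e, e', htt]))
  · rintro ⟨t, ht⟩
    obtain ⟨c, hc⟩ := S.surj _ (isSUJ_torMat ht)
    exact ⟨⟨c, mem_torus_iff.2 ⟨t, ht, hc⟩⟩, Subtype.ext (by simp [hc, torMat])⟩

variable (S)

/-- A coordinatized unitary group carries the subgroup data used in the lattice computation. -/
theorem exists_bnData (hF : IsUnitaryField F q) :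
    ∃ D : BNData G q (q ^ 2 - 1), D.C = S.torus := by
  obtain ⟨κ, hκ, hκ0, hκ1⟩ := hF.exists_fixed
  obtain ⟨n, hn⟩ := S.surj _ (isSUJ_gramJ hF)
  obtain ⟨d, hd⟩ := S.surj _ (isSUJ_torMat hκ0)
  refine ⟨{
    B := S.borel, U := S.unip, Z := S.transv, C := S.torus, M := S.levi, n := n, d := d
    Z_le_U := fun g hg => ⟨hg.1, hg.2.1⟩
    U_le_B := fun g hg => hg.1
    C_le_B := fun g hg => hg.1
    B_eq := fun b hb => borel_eq hb
    Z_normal := fun b hb z hz => transv_normal hF hb hz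
    U_normal := fun b hb u hu => unip_normal hb hu
    U_inf_C := fun u hu hc => eq_one_of_mem_unip hu (mem_torus.1 hc).2
    n_C := ?_
    n_sq := n_mul_n hn
    n_notMem := ?_
    bruhat := S.bruhat hF hn
    U_n := ?_
    C_trans := fun u hu huZ u' hu' huZ' => torus_trans hF hu huZ hu' huZ'
    C_free := fun u hu huZ c hc h => torus_free hF hu huZ hc h
    C_transZ := fun z hz hz1 z' hz' hz1' => torus_transZ hF hz hz1 hz' hz1'
    d_C := mem_torus_iff.2 ⟨κ, hκ0, hd⟩
    d_mem := fun K hZ hnZ => tor_mem hF hκ hκ0 hn hd K hZ hnZ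
    d_comm := fun u hu huZ => tor_comm hF hκ hκ0 hκ1 hd hu huZ
    Z_le_M := ?_
    C_le_M := ?_
    n_M := ?_
    U_M := not_unip_le_levi hF
    card_Z := card_transv hF
    card_C := card_torus hF }, rfl⟩
  · intro c hc
    obtain ⟨⟨h1, h2, h3⟩, h4, h5, h6⟩ := mem_torus.1 hc
    rw [mem_torus]
    simp [nmn_entry hn, *]
  · intro h
    have := (mem_borel.1 h).2.1
    simp [hn, gramJ] at this
  · intro u hu h
    have h' := mem_borel.1 h
    simp only [nmn_entry hn] at h'
    obtain ⟨h1, h2, h3⟩ := h'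
    exact eq_one_of_mem_unip hu ⟨h3, h2, h1⟩
  · intro z hz
    obtain ⟨⟨h1, h2, h3⟩, -, h4, h5⟩ := mem_transv.1 hz
    exact mem_levi.2 ⟨h4, h1, h5, h3⟩
  · intro z hz
    obtain ⟨⟨h1, h2, h3⟩, h4, h5, h6⟩ := mem_torus.1 hz
    exact mem_levi.2 ⟨h4, h1, h6, h3⟩
  · rw [mem_levi]
    simp [hn, gramJ]

end SUJModel

end Hyperbolic

/-! ### The center of `SU(3, q)` -/

section UnitaryMatrices

variable {F : Type*} [Field F] [StarRing F] {q : ℕ}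

/-- Unitary matrices of determinant one, for the standard Hermitian form. -/
def IsSU (m : Matrix (Fin 3) (Fin 3) F) : Prop := m.conjTranspose * m = 1 ∧ m.det = 1

theorem isSU_diagonal {z : F} (hz : star z * z = 1) : IsSU (Matrix.diagonal ![z, z⁻¹, 1]) := by
  have hz0 : z ≠ 0 := right_ne_zero_of_mul_eq_one hz
  constructor
  · rw [Matrix.diagonal_conjTranspose, Matrix.diagonal_mul_diagonal, ← Matrix.diagonal_one]
    congr 1
    ext i
    fin_cases i
    · simpa using hz
    · simpa [mul_comm] using congrArg (·⁻¹) hz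
    · simp
  · rw [Matrix.det_diagonal, Fin.prod_univ_three]
    simp [hz0]

theorem isSU_cycle : IsSU (!![0, 1, 0; 0, 0, 1; 1, 0, 0] : Matrix (Fin 3) (Fin 3) F) := by
  constructor
  · ext i j
    rw [Matrix.mul_apply, Fin.sum_univ_three]
    fin_cases i <;> fin_cases j <;> simp
  · simp [Matrix.det_fin_three]

/-- A matrix in the center commutes with a diagonal matrix with distinct entries, hence is
diagonal, and with a cyclic permutation matrix, hence is scalar; the scalar `a` satisfies
`a³ = 1 = a^(q+1)`, and `3 ∤ q + 1`. -/
theorem eq_one_of_commute (hF : IsUnitaryField F q) {m : Matrix (Fin 3) (Fin 3) F} (hm : IsSU m)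
    (hcomm : ∀ k, IsSU k → m * k = k * m) : m = 1 := by
  obtain ⟨t, ht⟩ := hF.trace_aux.2 1 (star_one F)
  have hts : t ≠ star t := by
    intro h
    rw [← h, hF.add_self] at ht
    exact zero_ne_one ht
  have ht0 : t ≠ 0 := by
    rintro rfl
    exact hts (star_zero F).symm
  have hs0 : star t ≠ 0 := star_ne_zero.2 ht0
  set z : F := t / star t with hz
  have hzz : star z * z = 1 := by
    rw [hz, star_div₀, star_star]
    field_simp
  have hz0 : z ≠ 0 := right_ne_zero_of_mul_eq_one hzz
  have hz1 : z ≠ 1 := by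
    rw [hz, Ne, div_eq_one_iff_eq hs0]
    exact hts
  have hzi : z ≠ z⁻¹ := by
    intro h
    have h1 : z * z = 1 := by
      nth_rewrite 2 [h]
      exact mul_inv_cancel₀ hz0
    apply hz1
    have h2 : (z + 1) * (z + 1) = 0 := by linear_combination h1 + (z + 1) * hF.two_eq_zero
    exact hF.eq_of_add (mul_self_eq_zero.1 h2)
  have hzi1 : z⁻¹ ≠ 1 := by
    rwa [Ne, inv_eq_one]
  have hd : ∀ i j, m i j * ![z, z⁻¹, 1] j = ![z, z⁻¹, 1] i * m i j := by
    intro i j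
    have := congrFun (congrFun (hcomm _ (isSU_diagonal hzz)) i) j
    rwa [Matrix.mul_diagonal, Matrix.diagonal_mul] at this
  have hoff : ∀ i j, ![z, z⁻¹, 1] j ≠ ![z, z⁻¹, 1] i → m i j = 0 := by
    intro i j hij
    have h := hd i j
    have h' : m i j * (![z, z⁻¹, 1] j - ![z, z⁻¹, 1] i) = 0 := by linear_combination h
    exact (mul_eq_zero.1 h').resolve_right (sub_ne_zero.2 hij)
  have h01 := hoff 0 1 (by simpa using hzi.symm)
  have h10 := hoff 1 0 (by simpa using hzi)
  have h02 := hoff 0 2 (by simpa using hz1.symm)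
  have h20 := hoff 2 0 (by simpa using hz1)
  have h12 := hoff 1 2 (by simpa using hzi1.symm)
  have h21 := hoff 2 1 (by simpa using hzi1)
  have hc : ∀ i j, (m * (!![0, 1, 0; 0, 0, 1; 1, 0, 0] : Matrix (Fin 3) (Fin 3) F)) i j =
      ((!![0, 1, 0; 0, 0, 1; 1, 0, 0] : Matrix (Fin 3) (Fin 3) F) * m) i j := fun i j => by
    rw [hcomm _ isSU_cycle]
  simp only [Matrix.mul_apply, Fin.sum_univ_three] at hc
  have e1 : m 0 0 = m 1 1 := by simpa using hc 0 1
  have e2 : m 1 1 = m 2 2 := by simpa using hc 1 2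
  have hdet := hm.2
  rw [Matrix.det_fin_three] at hdet
  have h3 : m 0 0 * m 0 0 * m 0 0 = 1 := by
    simpa [h01, h10, h02, h20, h12, h21, ← e2, ← e1] using hdet
  have hu : star (m 0 0) * m 0 0 = 1 := by
    have := congrFun (congrFun hm.1 0) 0
    rw [Matrix.mul_apply, Fin.sum_univ_three] at this
    simpa [h10, h20] using this
  have ha0 : m 0 0 ≠ 0 := right_ne_zero_of_mul_eq_one hu
  have ha : m 0 0 = 1 := by
    apply hF.eq_one_of_sq_eq_star ha0
    apply mul_right_cancel₀ ha0
    rw [hu, ← h3]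
    ring
  ext i j
  fin_cases i <;> fin_cases j <;> simp [h01, h10, h02, h20, h12, h21, ← e2, ← e1, ha]

/-! ### A hyperbolic pair of eigenvectors -/

/-- A matrix over `F_{q²}` with `A^{q²} = A` and `A^{q+1} ≠ 1` has an eigenvalue which is not of
norm one: `∏_a (A - a) = A^{q²} - A = 0`, so otherwise the factors with `a^{q+1} ≠ 1` can be
cancelled, and the product of the remaining ones divides `A^{q+1} - 1`. -/
theorem exists_eigenvalue (hF : IsUnitaryField F q) {A : Matrix (Fin 3) (Fin 3) F}
    (hA : A ^ q ^ 2 = A) (hne : A ^ (q + 1) ≠ 1) :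
    ∃ l : F, (A - Matrix.scalar (Fin 3) l).det = 0 ∧ star l * l ≠ 1 := by
  by_contra! hcon
  have := hF.finite
  have := Fintype.ofFinite F
  have h4 := hF.four_le
  have hcard : Fintype.card F = q ^ 2 := by rw [← Nat.card_eq_fintype_card, hF.card]
  let p : F → Polynomial F := fun a => Polynomial.X - Polynomial.C a
  have hall : ∏ a, p a = Polynomial.X ^ q ^ 2 - Polynomial.X := by
    rw [← hcard]
    have hlt : 1 < Fintype.card F := Fintype.one_lt_card
    have hroots := FiniteField.roots_X_pow_card_sub_X F
    have h := Polynomial.prod_multiset_X_sub_C_of_monic_of_roots_card_eq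
      (p := (Polynomial.X ^ Fintype.card F - Polynomial.X : Polynomial F))
      (Polynomial.monic_X_pow_sub (by simpa using hlt)) (by
        rw [hroots, FiniteField.X_pow_card_sub_X_natDegree_eq F hlt]
        rfl)
    rw [hroots] at h
    exact h
  have hp : ∀ a, Polynomial.aeval A (p a) = A - Matrix.scalar (Fin 3) a := by
    intro a
    simp only [p, map_sub, Polynomial.aeval_X, Polynomial.aeval_C]
    rfl
  have hunit : ∀ s : Finset F, (∀ a ∈ s, star a * a ≠ 1) →
      IsUnit (Polynomial.aeval A (∏ a ∈ s, p a)) := by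
    intro s
    induction s using Finset.induction_on with
    | empty => simp
    | insert a s has ih =>
      intro hs
      rw [Finset.prod_insert has, map_mul, hp]
      refine IsUnit.mul ?_ (ih fun b hb => hs b (Finset.mem_insert_of_mem hb))
      rw [Matrix.isUnit_iff_isUnit_det, isUnit_iff_ne_zero]
      exact fun h => hs a (Finset.mem_insert_self a s) (hcon a h)
  have hsplit := Finset.prod_filter_mul_prod_filter_not Finset.univ (fun a : F => star a * a = 1) p
  have hzero : Polynomial.aeval A (∏ a, p a) = 0 := by
    rw [hall, map_sub, map_pow, Polynomial.aeval_X, hA, sub_self]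
  rw [← hsplit, map_mul] at hzero
  have hzero' := (hunit (Finset.univ.filter fun a : F => ¬ star a * a = 1)
    (by simp)).mul_left_eq_zero.1 hzero
  have hdvd : ∏ a with star a * a = 1, p a ∣ (Polynomial.X ^ (q + 1) - 1 : Polynomial F) := by
    apply Finset.prod_dvd_of_coprime
    · intro a _ b _ hab
      exact Polynomial.pairwise_coprime_X_sub_C Function.injective_id hab
    · intro a ha
      rw [Polynomial.dvd_iff_isRoot]
      have ha' : star a * a = 1 := by simpa using ha
      simp [Polynomial.IsRoot, pow_succ, ← hF.star_eq, ha']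
  obtain ⟨r, hr⟩ := hdvd
  have h := congrArg (Polynomial.aeval A) hr
  rw [map_mul, hzero', zero_mul] at h
  simp only [map_sub, map_pow, Polynomial.aeval_X, map_one] at h
  exact hne (sub_eq_zero.1 h)

end UnitaryMatrices

section HyperbolicPair

variable {F : Type*} [Field F] [StarRing F] {q : ℕ}

/-- An eigenvector of a unitary matrix is isotropic unless its eigenvalue has norm one. -/
theorem isotropic_of_eigenvector {A : Matrix (Fin 3) (Fin 3) F} (hA : A.conjTranspose * A = 1)
    {l : F} {v : Fin 3 → F} (hv : A.mulVec v = l • v) (hl : star l * l ≠ 1) :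
    dotProduct (star v) v = 0 := by
  have h1 : dotProduct (star (A.mulVec v)) (A.mulVec v) = dotProduct (star v) v := by
    rw [Matrix.star_mulVec, ← Matrix.dotProduct_mulVec, Matrix.mulVec_mulVec, hA,
      Matrix.one_mulVec]
  rw [hv, star_smul, smul_dotProduct, dotProduct_smul, smul_eq_mul, smul_eq_mul] at h1
  have h2 : (star l * l - 1) * dotProduct (star v) v = 0 := by linear_combination h1
  exact (mul_eq_zero.1 h2).resolve_left (sub_ne_zero.2 hl)

omit [StarRing F] in
theorem exists_eigenvector {A : Matrix (Fin 3) (Fin 3) F} {l : F}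
    (h : (A - Matrix.scalar (Fin 3) l).det = 0) : ∃ v : Fin 3 → F, v ≠ 0 ∧ A.mulVec v = l • v := by
  obtain ⟨v, hv, h⟩ := Matrix.exists_mulVec_eq_zero_iff.2 h
  refine ⟨v, hv, ?_⟩
  rw [Matrix.sub_mulVec, sub_eq_zero] at h
  rw [h]
  ext i
  simp [Matrix.scalar_apply, Matrix.mulVec_diagonal]

/-- The eigenvalues of a unitary matrix are permuted by `l ↦ l̄⁻¹`. -/
theorem exists_dual_eigenvector {A : Matrix (Fin 3) (Fin 3) F} (hA : A.conjTranspose * A = 1)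
    {l : F} (hl0 : l ≠ 0) (h : (A - Matrix.scalar (Fin 3) l).det = 0) :
    ∃ w : Fin 3 → F, w ≠ 0 ∧ A.mulVec w = (star l)⁻¹ • w := by
  have h' : (A.conjTranspose - Matrix.scalar (Fin 3) (star l)).det = 0 := by
    have : A.conjTranspose - Matrix.scalar (Fin 3) (star l) =
        (A - Matrix.scalar (Fin 3) l).conjTranspose := by
      rw [Matrix.conjTranspose_sub, Matrix.scalar_apply, Matrix.scalar_apply,
        Matrix.diagonal_conjTranspose]
      rfl
    rw [this, Matrix.det_conjTranspose, h, star_zero]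
  obtain ⟨w, hw, e⟩ := exists_eigenvector h'
  refine ⟨w, hw, ?_⟩
  have hs : star l ≠ 0 := star_ne_zero.2 hl0
  have e2 : A.mulVec (A.conjTranspose.mulVec w) = w := by
    rw [Matrix.mulVec_mulVec, mul_eq_one_comm.1 hA, Matrix.one_mulVec]
  rw [e, Matrix.mulVec_smul] at e2
  rw [eq_inv_smul_iff₀ hs]
  exact e2

omit [StarRing F] in
theorem exists_minor_ne_zero {A : Matrix (Fin 3) (Fin 3) F} {l k : F} (hlk : l ≠ k)
    {v w : Fin 3 → F} (hv : v ≠ 0) (hw : w ≠ 0) (hAv : A.mulVec v = l • v)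
    (hAw : A.mulVec w = k • w) : ∃ i j, v i * w j ≠ v j * w i := by
  by_contra! h
  obtain ⟨i, hi⟩ := Function.ne_iff.1 hv
  have h1 : v i • w = w i • v := by
    ext j
    simp [h i j, mul_comm]
  have h2 := congrArg A.mulVec h1
  rw [Matrix.mulVec_smul, Matrix.mulVec_smul, hAv, hAw, smul_comm (v i), h1, smul_comm (w i)] at h2
  have h3 : (k - l) • (w i • v) = 0 := by rw [sub_smul, h2, sub_self]
  rw [← h1, smul_smul, smul_eq_zero] at h3
  rcases h3 with h3 | h3
  · exact (mul_ne_zero (sub_ne_zero.2 hlk.symm) hi) h3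
  · exact hw h3

/-- Totally isotropic subspaces of a nondegenerate ternary Hermitian form are at most
one-dimensional: if `v` and `w` spanned a totally isotropic plane, `v̄` and `w̄` would both be
multiples of the cross product of `v` and `w`. -/
theorem dotProduct_ne_zero_of_minor {v w : Fin 3 → F} (hv : dotProduct (star v) v = 0)
    (hw : dotProduct (star w) w = 0) (h : ∃ i j, v i * w j ≠ v j * w i) :
    dotProduct (star v) w ≠ 0 := by
  intro hvw
  have hwv : dotProduct (star w) v = 0 := by
    have := congrArg star hvw
    simp only [dotProduct, Fin.sum_univ_three, Pi.star_apply, star_add, star_mul', star_star,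
      star_zero] at this ⊢
    linear_combination this
  simp only [dotProduct, Fin.sum_univ_three, Pi.star_apply] at hv hw hvw hwv
  let u : Fin 3 → F := ![v 1 * w 2 - v 2 * w 1, v 2 * w 0 - v 0 * w 2, v 0 * w 1 - v 1 * w 0]
  have hu0 : u 0 = v 1 * w 2 - v 2 * w 1 := rfl
  have hu1 : u 1 = v 2 * w 0 - v 0 * w 2 := rfl
  have hu2 : u 2 = v 0 * w 1 - v 1 * w 0 := rfl
  have hcross : ∀ x : Fin 3 → F, x 0 * v 0 + x 1 * v 1 + x 2 * v 2 = 0 →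
      x 0 * w 0 + x 1 * w 1 + x 2 * w 2 = 0 → ∀ i j, x i * u j = x j * u i := by
    intro x hv hw
    have e01 : x 0 * u 1 = x 1 * u 0 := by
      rw [hu0, hu1]
      linear_combination v 2 * hw - w 2 * hv
    have e12 : x 1 * u 2 = x 2 * u 1 := by
      rw [hu1, hu2]
      linear_combination v 0 * hw - w 0 * hv
    have e02 : x 0 * u 2 = x 2 * u 0 := by
      rw [hu0, hu2]
      linear_combination w 1 * hv - v 1 * hw
    intro i j
    fin_cases i <;> fin_cases j
    exacts [rfl, e01, e02, e01.symm, rfl, e12, e02.symm, e12.symm, rfl]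
  have hx : ∀ i j, star (v i) * u j = star (v j) * u i := hcross (fun i => star (v i)) hv hvw
  have hy : ∀ i j, star (w i) * u j = star (w j) * u i := hcross (fun i => star (w i)) hwv hw
  have key : ∀ k i j, u k * u k * star (v i * w j - v j * w i) = 0 := by
    intro k i j
    simp only [star_sub, star_mul']
    linear_combination u k * star (w j) * hx i k + star (v k) * u i * hy j k
      - u k * star (w i) * hx j k - star (v k) * u j * hy i k
  have hz : ∀ x : F, x * x * star x = 0 → x = 0 := by
    intro x hx
    simpa using hx
  have k0 := hz _ (key 0 1 2)
  have k1 := hz _ (key 1 2 0)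
  have k2 := hz _ (key 2 0 1)
  rw [hu0] at k0
  rw [hu1] at k1
  rw [hu2] at k2
  obtain ⟨i, j, hij⟩ := h
  have hall : ∀ i j, v i * w j = v j * w i := by
    have e12 := sub_eq_zero.1 k0
    have e20 := sub_eq_zero.1 k1
    have e01 := sub_eq_zero.1 k2
    intro i j
    fin_cases i <;> fin_cases j
    exacts [rfl, e01, e20.symm, e01.symm, rfl, e12, e20, e12.symm, rfl]
  exact hij (hall i j)

end HyperbolicPair

section HyperbolicBasis

variable {F : Type*} [Field F] [StarRing F] {q : ℕ}

/-- A unitary matrix `A` with an eigenvalue `l` not of norm one has, in a suitable basis with Gram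
matrix `gramJ`, the first and the last basis vector as eigenvectors. The columns of `P` are the
eigenvectors `v`, `w` for `l` and `l̄⁻¹`, scaled to have product one, and between them the
conjugate of their cross product. -/
theorem exists_hyperbolic_basis (hF : IsUnitaryField F q) {A : Matrix (Fin 3) (Fin 3) F}
    (hA : A.conjTranspose * A = 1) {l : F} (hl : (A - Matrix.scalar (Fin 3) l).det = 0)
    (hl1 : star l * l ≠ 1) :
    ∃ (P : Matrix (Fin 3) (Fin 3) F) (k : F), P.conjTranspose * P = gramJ F ∧
      ∀ i, (A * P) i 0 = l * P i 0 ∧ (A * P) i 2 = k * P i 2 := by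
  obtain ⟨v, hv, hAv⟩ := exists_eigenvector hl
  have hl0 : l ≠ 0 := by
    rintro rfl
    rw [zero_smul] at hAv
    have h := congrArg A.conjTranspose.mulVec hAv
    rw [Matrix.mulVec_mulVec, hA, Matrix.one_mulVec, Matrix.mulVec_zero] at h
    exact hv h
  have hs0 : star l ≠ 0 := star_ne_zero.2 hl0
  obtain ⟨w', hw', hAw'⟩ := exists_dual_eigenvector hA hl0 hl
  have hk : star (star l)⁻¹ * (star l)⁻¹ ≠ 1 := by
    rw [star_inv₀, star_star, ← mul_inv, Ne, inv_eq_one, mul_comm]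
    exact hl1
  have hlk : l ≠ (star l)⁻¹ := by
    intro h
    apply hl1
    nth_rewrite 2 [h]
    exact mul_inv_cancel₀ hs0
  have hvv := isotropic_of_eigenvector hA hAv hl1
  have hww' := isotropic_of_eigenvector hA hAw' hk
  have hc := dotProduct_ne_zero_of_minor hvv hww' (exists_minor_ne_zero hlk hv hw' hAv hAw')
  obtain ⟨w, hAw, hww, hvw⟩ : ∃ w : Fin 3 → F, A.mulVec w = (star l)⁻¹ • w ∧
      dotProduct (star w) w = 0 ∧ dotProduct (star v) w = 1 := by
    have e : A.mulVec ((dotProduct (star v) w')⁻¹ • w') =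
        (star l)⁻¹ • ((dotProduct (star v) w')⁻¹ • w') := by
      rw [Matrix.mulVec_smul, hAw', smul_comm]
    refine ⟨(dotProduct (star v) w')⁻¹ • w', e, isotropic_of_eigenvector hA e hk, ?_⟩
    rw [dotProduct_smul, smul_eq_mul, inv_mul_cancel₀ hc]
  have hwv : dotProduct (star w) v = 1 := by
    have := congrArg star hvw
    simp only [dotProduct, Fin.sum_univ_three, Pi.star_apply, star_add, star_mul', star_star,
      star_one] at this ⊢
    linear_combination this
  simp only [dotProduct, Fin.sum_univ_three, Pi.star_apply] at hvv hww hvw hwv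
  have h2 := hF.two_eq_zero
  let u : Fin 3 → F :=
    ![star (v 1 * w 2 - v 2 * w 1), star (v 2 * w 0 - v 0 * w 2), star (v 0 * w 1 - v 1 * w 0)]
  have hu0 : u 0 = star (v 1 * w 2 - v 2 * w 1) := rfl
  have hu1 : u 1 = star (v 2 * w 0 - v 0 * w 2) := rfl
  have hu2 : u 2 = star (v 0 * w 1 - v 1 * w 0) := rfl
  have hcol : ∀ (x : Fin 3 → F) i, (A.mulVec x) i = A i 0 * x 0 + A i 1 * x 1 + A i 2 * x 2 :=
    fun x i => by rw [Matrix.mulVec, dotProduct, Fin.sum_univ_three]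
  let x : Fin 3 → Fin 3 → F := ![v, u, w]
  let P : Matrix (Fin 3) (Fin 3) F := Matrix.of fun i j => x j i
  have hP : ∀ i j, P i j = x j i := fun i j => rfl
  have hgram : ∀ i j, star (x i 0) * x j 0 + star (x i 1) * x j 1 + star (x i 2) * x j 2 =
      gramJ F i j := by
    have g00 := hvv
    have g02 := hvw
    have g20 := hwv
    have g22 := hww
    have g01 : star (v 0) * u 0 + star (v 1) * u 1 + star (v 2) * u 2 = 0 := by
      simp only [hu0, hu1, hu2, star_sub, star_mul']
      ring
    have g21 : star (w 0) * u 0 + star (w 1) * u 1 + star (w 2) * u 2 = 0 := by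
      simp only [hu0, hu1, hu2, star_sub, star_mul']
      ring
    have g10 : star (u 0) * v 0 + star (u 1) * v 1 + star (u 2) * v 2 = 0 := by
      simp only [hu0, hu1, hu2, star_star]
      ring
    have g12 : star (u 0) * w 0 + star (u 1) * w 1 + star (u 2) * w 2 = 0 := by
      simp only [hu0, hu1, hu2, star_star]
      ring
    have g11 : star (u 0) * u 0 + star (u 1) * u 1 + star (u 2) * u 2 = 1 := by
      simp only [hu0, hu1, hu2, star_star, star_sub, star_mul']
      linear_combination (star (w 0) * w 0 + star (w 1) * w 1 + star (w 2) * w 2) * hvv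
        - (star (w 0) * v 0 + star (w 1) * v 1 + star (w 2) * v 2) * hvw - hwv - h2
    intro i j
    fin_cases i <;> fin_cases j
    exacts [g00, g01, g02, g10, g11, g12, g20, g21, g22]
  refine ⟨P, (star l)⁻¹, ?_, fun i => ⟨?_, ?_⟩⟩
  · ext i j
    simp only [Matrix.mul_apply, Fin.sum_univ_three, Matrix.conjTranspose_apply, hP, hgram]
  · rw [Matrix.mul_apply, Fin.sum_univ_three]
    have := congrFun hAv i
    rw [hcol] at this
    exact this
  · rw [Matrix.mul_apply, Fin.sum_univ_three]
    have := congrFun hAw i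
    rw [hcol] at this
    exact this

/-- Change of basis from an orthonormal basis to one with Gram matrix `gramJ`. -/
theorem exists_model {G : Type*} [Group G]
    (φ : G →* Matrix (Fin 3) (Fin 3) F) (inj : Function.Injective φ) (hφ : ∀ g, IsSU (φ g))
    (surj : ∀ m, IsSU m → ∃ g, φ g = m) {P : Matrix (Fin 3) (Fin 3) F}
    (hP : P.conjTranspose * P = gramJ F) :
    ∃ S : SUJModel G F, ∀ g, P * S.ψ g = φ g * P := by
  set J := gramJ F with hJ
  have hJJ : J * J = 1 := SUJModel.gramJ_mul_gramJ
  have hJs : J.conjTranspose = J := by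
    ext i j
    fin_cases i <;> fin_cases j <;> simp [hJ, gramJ]
  obtain ⟨Q, hQ⟩ : ∃ Q, Q = J * P.conjTranspose := ⟨_, rfl⟩
  have hQP : Q * P = 1 := by rw [hQ, Matrix.mul_assoc, hP, hJJ]
  have hPQ : P * Q = 1 := mul_eq_one_comm.1 hQP
  have hQs : Q.conjTranspose = P * J := by
    rw [hQ, Matrix.conjTranspose_mul, Matrix.conjTranspose_conjTranspose, hJs]
  have hJQ : J * Q = P.conjTranspose := by rw [hQ, ← Matrix.mul_assoc, hJJ, Matrix.one_mul]
  have hdet : Q.det * P.det = 1 := by rw [← Matrix.det_mul, hQP, Matrix.det_one]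
  have c1 : ∀ m : Matrix (Fin 3) (Fin 3) F, P * (Q * m) = m := fun m => by
    rw [← Matrix.mul_assoc, hPQ, Matrix.one_mul]
  have c2 : ∀ m : Matrix (Fin 3) (Fin 3) F, Q * (P * m) = m := fun m => by
    rw [← Matrix.mul_assoc, hQP, Matrix.one_mul]
  have c3 : ∀ m : Matrix (Fin 3) (Fin 3) F, J * (J * m) = m := fun m => by
    rw [← Matrix.mul_assoc, hJJ, Matrix.one_mul]
  have c4 : ∀ m : Matrix (Fin 3) (Fin 3) F, P.conjTranspose * (P * m) = J * m := fun m => by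
    rw [← Matrix.mul_assoc, hP]
  let ψ : G →* Matrix (Fin 3) (Fin 3) F :=
    { toFun := fun g => Q * φ g * P
      map_one' := by rw [map_one, Matrix.mul_one, hQP]
      map_mul' := fun g h => by
        simp only [map_mul, Matrix.mul_assoc, c1] }
  have hψ : ∀ g, ψ g = Q * φ g * P := fun g => rfl
  refine ⟨⟨ψ, ?_, ?_, ?_⟩, ?_⟩
  · intro g h hgh
    apply inj
    rw [hψ, hψ] at hgh
    have := congrArg (fun m => P * m * Q) hgh
    simpa only [Matrix.mul_assoc, c1, hPQ, Matrix.mul_one] using this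
  · intro g
    constructor
    · rw [hψ, Matrix.conjTranspose_mul, Matrix.conjTranspose_mul, hQs]
      have hg : ∀ m, (φ g).conjTranspose * (φ g * m) = m := fun m => by
        rw [← Matrix.mul_assoc, (hφ g).1, Matrix.one_mul]
      simp only [Matrix.mul_assoc]
      rw [← hJ, c3, c1, hg, hP]
    · rw [hψ, Matrix.det_mul, Matrix.det_mul, (hφ g).2]
      linear_combination hdet
  · intro m hm
    obtain ⟨g, hg⟩ := surj (P * m * Q) ⟨by
      rw [Matrix.conjTranspose_mul, Matrix.conjTranspose_mul, hQs]
      have h1 : ∀ k, m.conjTranspose * (J * (m * k)) = J * k := fun k => by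
        rw [← Matrix.mul_assoc J, ← Matrix.mul_assoc, ← Matrix.mul_assoc, hm.1]
      simp only [Matrix.mul_assoc]
      rw [c4, h1, c3, hPQ], by
      rw [Matrix.det_mul, Matrix.det_mul, hm.2]
      linear_combination hdet⟩
    refine ⟨g, ?_⟩
    change ψ g = m
    rw [hψ, hg]
    simp only [Matrix.mul_assoc, c2, hQP, Matrix.mul_one]
  · intro g
    change P * ψ g = _
    rw [hψ]
    simp only [Matrix.mul_assoc, c1]

end HyperbolicBasis

/-! ### The groups `SU(3, q)` and `PSU(3, q)` -/

theorem isUnitaryField_Fq2 {n : ℕ} (hn : 1 ≤ n) : IsUnitaryField (Fq2 n) (qval n) where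
  finite := inferInstance
  two_eq_zero := CharTwo.two_eq_zero
  card := by
    rw [GaloisField.card 2 (2 ^ (n + 1)) (by positivity), ← pow_mul, pow_succ]
  star_eq _ := rfl
  four_le := by
    have h : 2 ≤ 2 ^ n := by
      calc 2 = 2 ^ 1 := rfl
        _ ≤ 2 ^ n := Nat.pow_le_pow_right (by norm_num) hn
    calc 4 = 2 ^ 2 := rfl
      _ ≤ 2 ^ 2 ^ n := Nat.pow_le_pow_right (by norm_num) h
  mod_three := by
    obtain ⟨k, rfl⟩ : ∃ k, n = k + 1 := ⟨n - 1, by omega⟩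
    have h : qval (k + 1) = 4 ^ 2 ^ k := by
      rw [qval, pow_succ, mul_comm, pow_mul]
      norm_num
    rw [h, Nat.pow_mod]
    norm_num

/-- The defining representation of `SU(3, q)`. -/
noncomputable def SU3.rep (n : ℕ) : SU3 n →* Matrix (Fin 3) (Fin 3) (Fq2 n) :=
  (Submonoid.subtype (Matrix.unitaryGroup (Fin 3) (Fq2 n))).comp (SU3 n).subtype

theorem SU3.rep_injective (n : ℕ) : Function.Injective (SU3.rep n) :=
  fun _ _ h => Subtype.ext (Subtype.ext h)

theorem SU3.isSU_rep {n : ℕ} (g : SU3 n) : IsSU (SU3.rep n g) :=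
  ⟨Matrix.mem_unitaryGroup_iff'.1 g.1.2, g.2⟩

theorem SU3.exists_rep {n : ℕ} (m : Matrix (Fin 3) (Fin 3) (Fq2 n)) (hm : IsSU m) :
    ∃ g, SU3.rep n g = m :=
  ⟨⟨⟨m, Matrix.mem_unitaryGroup_iff'.2 hm.1⟩, hm.2⟩, rfl⟩

theorem center_SU3 {n : ℕ} (hn : 1 ≤ n) : Subgroup.center (SU3 n) = ⊥ := by
  rw [eq_bot_iff]
  intro z hz
  rw [Subgroup.mem_bot]
  apply SU3.rep_injective n
  rw [map_one]
  refine eq_one_of_commute (isUnitaryField_Fq2 hn) (SU3.isSU_rep z) fun k hk => ?_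
  obtain ⟨g, rfl⟩ := SU3.exists_rep k hk
  rw [← map_mul, ← map_mul, Subgroup.mem_center_iff.1 hz g]

/-- Since its center is trivial, `SU(3, q)` is isomorphic to `PSU(3, q)`. -/
noncomputable def PSU3.equiv {n : ℕ} (hn : 1 ≤ n) : PSU3 n ≃* SU3 n :=
  (QuotientGroup.quotientMulEquivOfEq (center_SU3 hn)).trans QuotientGroup.quotientBot

/-- An element `x` of order `q² - 1` generates the diagonal torus in suitable hyperbolic
coordinates. -/
theorem exists_model_zpowers {n : ℕ} (hn : 1 ≤ n) {x : PSU3 n} (hx : orderOf x = qval n ^ 2 - 1) :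
    ∃ S : SUJModel (PSU3 n) (Fq2 n), S.torus = Subgroup.zpowers x := by
  have hF := isUnitaryField_Fq2 hn
  have h4 := hF.four_le
  let φ : PSU3 n →* Matrix (Fin 3) (Fin 3) (Fq2 n) :=
    (SU3.rep n).comp (PSU3.equiv hn).toMonoidHom
  have hinj : Function.Injective φ := (SU3.rep_injective n).comp (PSU3.equiv hn).injective
  have hφ : ∀ g, IsSU (φ g) := fun g => SU3.isSU_rep _
  have hsurj : ∀ m, IsSU m → ∃ g, φ g = m := by
    intro m hm
    obtain ⟨g, hg⟩ := SU3.exists_rep m hm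
    refine ⟨(PSU3.equiv hn).symm g, ?_⟩
    rw [← hg]
    exact congrArg (SU3.rep n) ((PSU3.equiv hn).apply_symm_apply g)
  have hq : qval n ^ 2 - 1 + 1 = qval n ^ 2 := Nat.sub_add_cancel (by nlinarith)
  have hA : φ x ^ qval n ^ 2 = φ x := by
    have e : x ^ (qval n ^ 2 - 1) = 1 := by
      rw [← hx]
      exact pow_orderOf_eq_one x
    have h1 : x ^ (qval n ^ 2) = x := by
      calc x ^ (qval n ^ 2) = x ^ (qval n ^ 2 - 1 + 1) := by rw [hq]
        _ = x := by rw [pow_succ x, e, one_mul]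
    rw [← map_pow, h1]
  have hne : φ x ^ (qval n + 1) ≠ 1 := by
    intro h
    rw [← map_pow, ← map_one φ] at h
    have h1 := orderOf_dvd_of_pow_eq_one (hinj h)
    have h2 := Nat.le_of_dvd (Nat.succ_pos _) h1
    rw [hx] at h2
    nlinarith
  obtain ⟨l, hl, hl1⟩ := exists_eigenvalue hF hA hne
  obtain ⟨P, k, hP, hcol⟩ := exists_hyperbolic_basis hF (hφ x).1 hl hl1
  obtain ⟨S, hS⟩ := exists_model φ hinj hφ hsurj hP
  have hJJ : gramJ (Fq2 n) * gramJ (Fq2 n) = 1 := SUJModel.gramJ_mul_gramJ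
  -- the eigenvectors in the first and last column of `P` make these columns of `S.ψ x` diagonal
  have hψ : ∀ i, S.ψ x i 0 = l * (1 : Matrix (Fin 3) (Fin 3) (Fq2 n)) i 0 ∧
      S.ψ x i 2 = k * (1 : Matrix (Fin 3) (Fin 3) (Fq2 n)) i 2 := by
    intro i
    have h1 : S.ψ x = gramJ (Fq2 n) * P.conjTranspose * (φ x * P) := by
      rw [← hS, Matrix.mul_assoc, ← Matrix.mul_assoc P.conjTranspose, hP, ← Matrix.mul_assoc, hJJ,
        Matrix.one_mul]
    have h2 : gramJ (Fq2 n) * P.conjTranspose * P = 1 := by rw [Matrix.mul_assoc, hP, hJJ]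
    rw [← h2, h1]
    constructor
    · rw [Matrix.mul_apply, Matrix.mul_apply, Finset.mul_sum]
      exact Finset.sum_congr rfl fun j _ => by rw [(hcol j).1]; ring
    · rw [Matrix.mul_apply, Matrix.mul_apply, Finset.mul_sum]
      exact Finset.sum_congr rfl fun j _ => by rw [(hcol j).2]; ring
  have h10 : S.ψ x 1 0 = 0 := by rw [(hψ 1).1]; simp
  have h20 : S.ψ x 2 0 = 0 := by rw [(hψ 2).1]; simp
  have h02 : S.ψ x 0 2 = 0 := by rw [(hψ 0).2]; simp
  have h12 : S.ψ x 1 2 = 0 := by rw [(hψ 1).2]; simp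
  have hB := SUJModel.mem_borel_of_col h10 h20
  have h22 := left_ne_zero_of_mul_eq_one (SUJModel.borel_diag hB).2.2
  have h01 : S.ψ x 0 1 = 0 := by
    have e := S.entry x 2 1
    rw [h02, h12] at e
    have e' : star (S.ψ x 2 2) * S.ψ x 0 1 = 0 := by simpa [gramJ] using e
    exact (mul_eq_zero.1 e').resolve_left (star_ne_zero.2 h22)
  refine ⟨S, ?_⟩
  have hxT : x ∈ S.torus := SUJModel.mem_torus.2 ⟨SUJModel.mem_borel.1 hB, h01, h02, h12⟩
  have hfin : Finite S.torus := Nat.finite_of_card_ne_zero (by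
    rw [SUJModel.card_torus hF]
    exact fun h => by rw [h] at hq; nlinarith)
  refine (Subgroup.eq_of_le_of_card_ge ((Subgroup.zpowers_le).2 hxT) ?_).symm
  rw [SUJModel.card_torus hF, Nat.card_zpowers, hx]

-- STATEMENT 5
theorem stmt5 (n : ℕ) (hn : 1 ≤ n) (mu : Subgroup (PSU3 n) → ℤ)
    (hmu : IsSubgroupMobius mu) (H : Subgroup (PSU3 n))
    (hcard : Nat.card H = qval n * (qval n ^ 2 - 1))
    (hx : ∃ x ∈ H, orderOf x = qval n ^ 2 - 1) :
    mu H = 1 := by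
  obtain ⟨x, hxH, hx⟩ := hx
  have hF := isUnitaryField_Fq2 hn
  have h4 := hF.four_le
  obtain ⟨S, hS⟩ := exists_model_zpowers hn hx
  obtain ⟨D, hD⟩ := S.exists_bnData hF
  have hfin : Finite (SU3 n) := Finite.of_injective _ (SU3.rep_injective n)
  have hfin' : Finite (PSU3 n) := Finite.of_equiv _ (PSU3.equiv hn).symm.toEquiv
  have hlt : qval n + 1 < qval n ^ 2 := by nlinarith
  refine D.mobius_eq_one (Nat.lt_sub_of_add_lt hlt) (by omega) hmu ?_ hcard
  rw [hD, hS]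
  exact (Subgroup.zpowers_le).2 hxH

end PSUPaper
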